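/- arXiv:2002.07925 — 2 statements merged into one kernel-verified Lean document; each statement's English description precedes it below -/
import Mathlib

section
/- If G is a 3-tree, then τ(G) ≤ (9/5)·ν(G) + 1/5. -/
open SimpleGraph

variable {V : Type*}

/-- A triangle transversal of `G`: a set of edges of `G` meeting every triangle of `G`
(so that its removal leaves a triangle-free graph). -/
def IsTriangleTransversal (G : SimpleGraph V) (X : Finset (Sym2 V)) : Prop :=
  ↑X ⊆ G.edgeSet ∧
    ∀ t : Finset V, G.IsNClique 3 t → ∃ e ∈ X, ∀ v ∈ e, v ∈ t

/-- A triangle packing of `G`: a set of pairwise edge-disjoint triangles of `G`. -/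
def IsTrianglePacking (G : SimpleGraph V) (Y : Finset (Finset V)) : Prop :=
  (∀ t ∈ Y, G.IsNClique 3 t) ∧
    ∀ s ∈ Y, ∀ t ∈ Y, s ≠ t →
      ∀ e ∈ G.edgeSet, ¬ ((∀ v ∈ e, v ∈ s) ∧ (∀ v ∈ e, v ∈ t))

/-- `tau G` is the minimum size of a triangle transversal of `G`. -/
noncomputable def tau (G : SimpleGraph V) : ℕ :=
  sInf {n | ∃ X : Finset (Sym2 V), IsTriangleTransversal G X ∧ X.card = n}

/-- `nu G` is the maximum size of a triangle packing of `G`. -/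
noncomputable def nu (G : SimpleGraph V) : ℕ :=
  sSup {n | ∃ Y : Finset (Finset V), IsTrianglePacking G Y ∧ Y.card = n}

/-- `G` is a 3-tree: it can be built from `K₃` by repeatedly adding a new vertex adjacent
to the three vertices of an existing triangle.  This is expressed via a construction
ordering `e : Fin (n+3) ≃ V`: the first three vertices form a triangle, and every later
vertex is adjacent, among earlier vertices, to exactly the vertices of a triangle. -/
def Is3Tree (G : SimpleGraph V) : Prop :=
  ∃ (n : ℕ) (e : Fin (n + 3) ≃ V),
    (∀ i j : Fin (n + 3), (i : ℕ) < 3 → (j : ℕ) < 3 → i ≠ j → G.Adj (e i) (e j)) ∧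
    ∀ j : Fin (n + 3), 3 ≤ (j : ℕ) →
      ∃ s : Finset V, G.IsNClique 3 s ∧
        (∀ v ∈ s, ∃ i : Fin (n + 3), (i : ℕ) < (j : ℕ) ∧ e i = v) ∧
        ∀ i : Fin (n + 3), (i : ℕ) < (j : ℕ) → (G.Adj (e j) (e i) ↔ e i ∈ s)

/-!
A 3-tree arises from a triangle by stacking vertices on triangles, and it is taken apart here from
the last stacked vertex back. Whatever has been removed beyond a triangle is remembered only through
a gadget: once the triangle has lost a side, destroying the removed part costs at most `cap ≤ 2`
more edges, whereas in a packing each of up to `cap` sides, except possibly one blocked side, can be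
exchanged for one more triangle. When a stacked vertex is removed, the gadgets on its three
triangles are replaced by a single gadget on the triangle below it, together with `t` deleted edges
and `p` packed triangles. A blocked side makes a gadget poorer for packings, and in return the
removed part is required to stay below the ratio `9 / 5` by an amount called the credit of the
gadget; the step is possible within the ratio because `5 * t + new credit ≤ 9 * p + old credit`, an
inequality about the finitely many gadgets on `K₄`. The last remaining triangle accounts for the
additive constant.
-/

/-- A surrogate for the part of a 3-tree that has been removed beyond one of its triangles. Once a
nonempty set of sides of the triangle has been deleted, destroying the removed part costs at most
`cap` further edges, and deleting all remaining sides suffices as well; conversely, each of up to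
`cap` sides other than `blocked` can be used by one additional removed triangle. Sides are indexed
by the opposite vertex. -/
structure Gadget where
  cap : Fin 3
  blocked : Option (Fin 3)

/-- Consider the triangles `vbc`, `avc`, `abv` obtained from `abc` by putting `v` in place of one
vertex. If `D` marks sides of `abc` and `S` marks spokes `va`, `vb`, `vc`, then `corner i D S` is
the set of sides marked in the `i`-th of these triangles. Its side `i` is the side `i` of `abc`, and
its side `j ≠ i` is the spoke at the third vertex, whose index in `Fin 3` is `-(i + j)`. -/
def corner (i : Fin 3) (D S : Finset (Fin 3)) : Finset (Fin 3) :=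
  {j | if j = i then i ∈ D else -(i + j) ∈ S}

theorem corner_mono_left (i : Fin 3) {D D' : Finset (Fin 3)} (h : D ⊆ D') (S : Finset (Fin 3)) :
    corner i D S ⊆ corner i D' S := by
  intro j
  simp only [corner, Finset.mem_filter_univ]
  split_ifs
  exacts [@h i, id]

theorem compl_corner_univ (i : Fin 3) (D : Finset (Fin 3)) :
    (corner i D Finset.univ)ᶜ = if i ∈ D then ∅ else {i} := by
  ext j
  by_cases hi : i ∈ D <;> simp [corner, hi]

theorem sum_card_compl_corner_univ (D : Finset (Fin 3)) :
    ∑ i, (corner i D Finset.univ)ᶜ.card = Dᶜ.card := by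
  simp [compl_corner_univ, apply_ite Finset.card, Finset.sum_ite, ← Finset.compl_filter]

theorem corner_univ_nonempty (i : Fin 3) (D : Finset (Fin 3)) :
    (corner i D Finset.univ).Nonempty :=
  ⟨i + 1, by simp [corner]⟩

theorem corner_singleton_nonempty (i : Fin 3) {D : Finset (Fin 3)} {d : Fin 3} (hd : d ∈ D) :
    (corner i D {d}).Nonempty := by
  by_cases hi : i = d
  · exact ⟨i, by simp [corner, hi, hd]⟩
  · have hne : -(i + d) ≠ i := by
      clear hd
      decide +revert
    have hd' : -(i + -(i + d)) = d := by abel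
    refine ⟨-(i + d), ?_⟩
    rw [corner, Finset.mem_filter_univ, if_neg hne, hd']
    exact Finset.mem_singleton_self d

namespace Gadget

/-- The number of edges that still have to be deleted to destroy a gadget when the sides in the
nonempty set `D` are already deleted. -/
def cost (A : Gadget) (D : Finset (Fin 3)) : ℕ :=
  min A.cap Dᶜ.card

/-- The number of additional edge-disjoint triangles of a gadget that the sides in `U` provide. -/
def gain (A : Gadget) (U : Finset (Fin 3)) : ℕ :=
  min A.cap (U \ A.blocked.toFinset).card

/-- The analogue of `gain` in which the triangle carrying the gadget may itself be packed. -/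
def closedGain (A : Gadget) (U : Finset (Fin 3)) : ℕ :=
  max (A.gain U) (if U = Finset.univ then 1 else 0)

/-- The budget, in units of `1 / 5`, by which the part of the graph replaced by a gadget stays below
the ratio `9 / 5`. -/
def credit (A : Gadget) : ℕ :=
  4 * A.cap * A.blocked.toFinset.card

theorem cost_le_cap (A : Gadget) (D : Finset (Fin 3)) : A.cost D ≤ A.cap :=
  min_le_left _ _

theorem cost_le_card_compl (A : Gadget) (D : Finset (Fin 3)) : A.cost D ≤ Dᶜ.card :=
  min_le_right _ _

theorem cost_antitone (A : Gadget) : Antitone A.cost := fun _ _ h =>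
  min_le_min_left _ (Finset.card_le_card (Finset.compl_subset_compl.2 h))

theorem gain_monotone (A : Gadget) : Monotone A.gain := fun _ _ h =>
  min_le_min_left _ (Finset.card_le_card (Finset.sdiff_subset_sdiff h Finset.Subset.rfl))

theorem closedGain_monotone (A : Gadget) : Monotone A.closedGain := fun U U' h => by
  refine max_le_max (A.gain_monotone h) ?_
  split_ifs with hU hU'
  exacts [le_rfl, absurd (Finset.univ_subset_iff.1 (hU ▸ h)) hU', zero_le_one, le_rfl]

theorem exists_subset_card_eq_gain (A : Gadget) (U : Finset (Fin 3)) :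
    ∃ T ⊆ U, T.card ≤ A.cap ∧ Disjoint T A.blocked.toFinset ∧ T.card = A.gain U := by
  obtain ⟨T, hT, hcard⟩ := Finset.exists_subset_card_eq
    (min_le_right (A.cap : ℕ) (U \ A.blocked.toFinset).card)
  exact ⟨T, hT.trans Finset.sdiff_subset, hcard.trans_le (min_le_left _ _),
    Finset.disjoint_of_subset_left hT Finset.sdiff_disjoint, hcard⟩

theorem five_mul_cap_add_one_le (A : Gadget) :
    5 * (A.cap + 1) ≤ 9 * A.closedGain Finset.univ + A.credit + 1 := by
  obtain ⟨c, b⟩ := A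
  revert c b
  decide

/-- A single gadget replacing two gadgets on the same triangle. Capacity two is always enough, since
a triangle that has lost a side has only two sides left. -/
def glue (A B : Gadget) : Gadget :=
  if A.cap = 0 then B
  else if B.cap = 0 then A
  else ⟨2, if A.blocked = B.blocked then A.blocked else none⟩

theorem credit_glue_le (A B : Gadget) : (A.glue B).credit ≤ A.credit + B.credit := by
  obtain ⟨c, b⟩ := A
  obtain ⟨c', b'⟩ := B
  revert c b c' b'
  decide +kernel

theorem exists_cost_le_cost_glue (A B : Gadget) {D : Finset (Fin 3)} (hD : D.Nonempty) :
    ∃ X : Finset (Fin 3), X.card + A.cost (D ∪ X) + B.cost (D ∪ X) ≤ (A.glue B).cost D := by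
  have hDc : Dᶜ.card ≤ 2 := by
    have := hD.card_pos
    rw [Finset.card_compl, Fintype.card_fin]
    omega
  by_cases hA : A.cap = 0
  · exact ⟨∅, by simp [glue, hA, cost]⟩
  by_cases hB : B.cap = 0
  · exact ⟨∅, by simp [glue, hA, hB, cost]⟩
  · exact ⟨Dᶜ, by simp [glue, hA, hB, cost, hDc]⟩

theorem exists_closedGain_glue_le (A B : Gadget) (U : Finset (Fin 3)) :
    ∃ Y ⊆ U, (A.glue B).closedGain U ≤ A.closedGain (U \ Y) + B.gain Y := by
  obtain ⟨c, b⟩ := A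
  obtain ⟨c', b'⟩ := B
  revert c b c' b' U
  decide +kernel

/-- The triangles around a vertex `v` stacked on `abc`, carrying the gadgets `A i`, can be destroyed
at the cost of a gadget `R` on `abc` and `t` further edges. -/
def AttachCost (A : Fin 3 → Gadget) (R : Gadget) (t : ℕ) : Prop :=
  ∀ D : Finset (Fin 3), D.Nonempty → ∃ S : Finset (Fin 3), (∀ i, (corner i D S).Nonempty) ∧
    S.card + ∑ i, (A i).cost (corner i D S) ≤ R.cost D + t

/-- The triangles around a vertex `v` stacked on `abc`, carrying the gadgets `A i`, provide as many
edge-disjoint triangles as a gadget `R` on `abc`, and `p` more. The function `o` assigns each spoke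
to one of the triangles around `v`. -/
def AttachGain (A : Fin 3 → Gadget) (R : Gadget) (p : ℕ) : Prop :=
  ∀ U : Finset (Fin 3), ∃ o : Fin 3 → Fin 3,
    R.gain U + p ≤ ∑ i, (A i).closedGain (corner i U {k | o k = i})

variable {A : Fin 3 → Gadget} {R : Gadget} {t p : ℕ}

/- Deleting the spoke opposite to a deleted side reaches all three triangles and leaves a cost of at
most the total capacity; deleting all spokes leaves only the remaining sides of `abc`. -/
theorem attachCost_of_add_cap_eq (ht : t + R.cap = min 4 (∑ i, ((A i).cap : ℕ)) + 1)
    (hR : R.cap = 2 → 4 ≤ ∑ i, ((A i).cap : ℕ)) : AttachCost A R t := by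
  intro D hD
  have hcap (S : Finset (Fin 3)) :
      ∑ i, (A i).cost (corner i D S) ≤ ∑ i, ((A i).cap : ℕ) :=
    Finset.sum_le_sum fun i _ => (A i).cost_le_cap _
  have hDcard : D.card + Dᶜ.card = 3 := Finset.card_add_card_compl D
  have hDpos := hD.card_pos
  by_cases hk : 4 ≤ ∑ i, ((A i).cap : ℕ)
  · refine ⟨Finset.univ, fun i => corner_univ_nonempty i D, ?_⟩
    have hsides : ∑ i, (A i).cost (corner i D Finset.univ) ≤ Dᶜ.card :=
      (Finset.sum_le_sum fun i _ => (A i).cost_le_card_compl _).trans_eq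
        (sum_card_compl_corner_univ D)
    rw [Finset.card_univ, Fintype.card_fin, cost]
    omega
  have hR1 : (R.cap : ℕ) ≠ 2 := fun h => hk (hR (Fin.ext h))
  by_cases hDu : D = Finset.univ
  · refine ⟨∅, fun i => ⟨i, by simp [corner, hDu]⟩, ?_⟩
    have := hcap ∅
    rw [Finset.card_empty]
    omega
  · obtain ⟨d, hd⟩ := hD
    refine ⟨{d}, fun i => corner_singleton_nonempty i hd, ?_⟩
    have hDc : 0 < Dᶜ.card := by simpa [Finset.card_pos, Finset.nonempty_iff_ne_empty] using hDu
    have := hcap {d}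
    rw [Finset.card_singleton, cost]
    omega

theorem attachGain_of_forall_card_le
    (h : ∀ T : Finset (Fin 3), T.card ≤ R.cap → Disjoint T R.blocked.toFinset →
      ∃ o : Fin 3 → Fin 3, T.card + p ≤ ∑ i, (A i).closedGain (corner i T {k | o k = i})) :
    AttachGain A R p := by
  intro U
  obtain ⟨T, hTU, hT, hdisj, hgain⟩ := R.exists_subset_card_eq_gain U
  obtain ⟨o, ho⟩ := h T hT hdisj
  rw [← hgain]
  exact ⟨o, ho.trans (Finset.sum_le_sum fun i _ =>
    (A i).closedGain_monotone (corner_mono_left i hTU _))⟩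

theorem exists_attach (A : Fin 3 → Gadget) :
    ∃ (R : Gadget) (t p : ℕ), 5 * t + R.credit ≤ 9 * p + ∑ i, (A i).credit ∧
      AttachCost A R t ∧ AttachGain A R p := by
  /- A spoke `k` is useless outside the triangles `k + 1` and `k + 2` containing it, so a set `O` of
  spokes is enough to encode an assignment. -/
  have hfinite : ∀ (c₀ c₁ c₂ : Fin 3) (b₀ b₁ b₂ : Option (Fin 3)),
      ∃ (r : Fin 3) (b : Option (Fin 3)) (p : Fin 4),
        (r = 2 → 4 ≤ (c₀ + c₁ + c₂ : ℕ)) ∧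
        5 * (min 4 (c₀ + c₁ + c₂ : ℕ) + 1 - r) + credit ⟨r, b⟩ ≤
          9 * p + (credit ⟨c₀, b₀⟩ + credit ⟨c₁, b₁⟩ + credit ⟨c₂, b₂⟩) ∧
        ∀ T : Finset (Fin 3), T.card ≤ r → Disjoint T b.toFinset → ∃ O : Finset (Fin 3),
          T.card + p ≤ ∑ i, closedGain (![⟨c₀, b₀⟩, ⟨c₁, b₁⟩, ⟨c₂, b₂⟩] i)
            (corner i T {k | (if k ∈ O then k + 1 else k + 2) = i}) := by
    decide +kernel
  obtain ⟨r, b, p, hr, hcredit, hgain⟩ := hfinite (A 0).cap (A 1).cap (A 2).cap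
    (A 0).blocked (A 1).blocked (A 2).blocked
  have hA : ![A 0, A 1, A 2] = A := by
    ext i; fin_cases i <;> rfl
  refine ⟨⟨r, b⟩, _, p, by rwa [Fin.sum_univ_three], attachCost_of_add_cap_eq ?_ ?_,
    attachGain_of_forall_card_le fun T hT hdisj => ?_⟩
  · rw [Fin.sum_univ_three]
    dsimp only
    omega
  · rwa [Fin.sum_univ_three]
  · obtain ⟨O, hO⟩ := hgain T hT hdisj
    exact ⟨_, hO.trans_eq (by rw [hA])⟩

end Gadget

section Triangle

variable {x : Fin 3 → V} {v : V}

/-- The side opposite to the vertex `x i` of a triangle with vertices `x 0`, `x 1`, `x 2`. -/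
def side (x : Fin 3 → V) (i : Fin 3) : Sym2 V :=
  s(x (i + 1), x (i + 2))

theorem side_third (x : Fin 3 → V) {i j : Fin 3} (hij : i ≠ j) :
    side x (-(i + j)) = s(x i, x j) := by
  have hcases : -(i + j) + 1 = i ∧ -(i + j) + 2 = j ∨ -(i + j) + 1 = j ∧ -(i + j) + 2 = i := by
    decide +revert
  rcases hcases with ⟨hi, hj⟩ | ⟨hj, hi⟩
  · rw [side, hi, hj]
  · rw [side, hi, hj, Sym2.eq_swap]

theorem side_injective (hx : x.Injective) : (side x).Injective := by
  intro i j h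
  simp only [side, Sym2.eq_iff, hx.eq_iff] at h
  revert i j
  decide

theorem notMem_side (hv : v ∉ Set.range x) (i : Fin 3) : v ∉ side x i := by
  simp only [side, Sym2.mem_iff, not_or]
  exact ⟨fun h => hv ⟨_, h.symm⟩, fun h => hv ⟨_, h.symm⟩⟩

theorem spoke_injective (hx : x.Injective) (v : V) :
    (fun k => s(v, x k)).Injective := fun _ _ h =>
  hx (Sym2.congr_right.1 h)

theorem side_update_self (x : Fin 3 → V) (i : Fin 3) (v : V) :
    side (Function.update x i v) i = side x i := by
  have h1 : i + 1 ≠ i := by decide +revert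
  have h2 : i + 2 ≠ i := by decide +revert
  rw [side, Function.update_of_ne h1, Function.update_of_ne h2, side]

theorem side_update_of_ne (x : Fin 3 → V) {i j : Fin 3} (v : V) (hij : j ≠ i) :
    side (Function.update x i v) j = s(v, x (-(i + j))) := by
  have hi : i ≠ -(i + j) := by decide +revert
  have hj : -(i + -(i + j)) = j := by abel
  have h := side_third (Function.update x i v) hi
  rwa [hj, Function.update_self, Function.update_of_ne hi.symm] at h

theorem update_injective_index (hv : v ∉ Set.range x) :
    (fun i => Function.update x i v).Injective := by
  intro i j h
  by_contra hij
  refine hv ⟨i, ?_⟩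
  simpa [Function.update_of_ne hij] using (congrFun h i).symm

variable [DecidableEq V]

/-- The indices of the sides of a triangle that belong to the edge set `F`. -/
def sidesIn (F : Finset (Sym2 V)) (x : Fin 3 → V) : Finset (Fin 3) :=
  {i | side x i ∈ F}

/-- The indices of the sides of a triangle that are reserved for it by `f`, which assigns each edge
to a triangle. -/
def sidesOwned (f : Sym2 V → Fin 3 → V) (x : Fin 3 → V) : Finset (Fin 3) :=
  {i | f (side x i) = x}

theorem sidesIn_mono (x : Fin 3 → V) {F F' : Finset (Sym2 V)} (h : F ⊆ F') :
    sidesIn F x ⊆ sidesIn F' x :=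
  Finset.monotone_filter_right _ fun _ _ hi => h hi

theorem subset_sidesIn_image (x : Fin 3 → V) (X : Finset (Fin 3)) :
    X ⊆ sidesIn (X.image (side x)) x := fun i hi => by
  simpa [sidesIn] using ⟨i, hi, rfl⟩

theorem corner_subset_sidesIn (F : Finset (Sym2 V)) (x : Fin 3 → V) (v : V) (i : Fin 3)
    (S : Finset (Fin 3)) :
    corner i (sidesIn F x) S ⊆
      sidesIn (F ∪ S.image fun k => s(v, x k)) (Function.update x i v) := by
  intro j hj
  rw [corner, Finset.mem_filter_univ] at hj
  rw [sidesIn, Finset.mem_filter_univ]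
  split_ifs at hj with hji
  · rw [hji, side_update_self]
    exact Finset.mem_union_left _ (Finset.mem_filter_univ i |>.1 hj)
  · rw [side_update_of_ne x v hji]
    exact Finset.mem_union_right _ (Finset.mem_image_of_mem _ hj)

end Triangle

section Stacked

variable {G : SimpleGraph V} {x : Fin 3 → V} {v : V}

theorem injective_of_pairwise_adj (hx : Pairwise fun i j => G.Adj (x i) (x j)) : x.Injective :=
  fun _ _ hij => by_contra fun h => (hx h).ne hij

theorem side_mem_edgeSet (hx : Pairwise fun i j => G.Adj (x i) (x j)) (i : Fin 3) :
    side x i ∈ G.edgeSet :=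
  hx (by decide +revert)

theorem pairwise_adj_update (hx : Pairwise fun i j => G.Adj (x i) (x j))
    (hv : ∀ i, G.Adj v (x i)) (i : Fin 3) :
    Pairwise fun j k => G.Adj (Function.update x i v j) (Function.update x i v k) := by
  intro j k hjk
  rcases eq_or_ne j i with rfl | hj
  · simpa [Function.update_of_ne hjk.symm] using hv k
  rcases eq_or_ne k i with rfl | hk
  · simpa [Function.update_of_ne hj] using (hv j).symm
  · simpa [Function.update_of_ne hj, Function.update_of_ne hk] using hx hjk

variable [DecidableEq V]

theorem isNClique_image_of_pairwise_adj (hx : Pairwise fun i j => G.Adj (x i) (x j)) :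
    G.IsNClique 3 (Finset.univ.image x) where
  isClique := by
    rw [Finset.coe_image, Finset.coe_univ, Set.image_univ]
    rintro _ ⟨i, rfl⟩ _ ⟨j, rfl⟩ hij
    exact hx fun h => hij (congrArg x h)
  card_eq := Finset.card_image_of_injective _ (injective_of_pairwise_adj hx)

theorem exists_image_update_eq (hx : x.Injective) {s : Finset V} (hs : s.card = 3) (hv : v ∈ s)
    (hsx : ∀ u ∈ s.erase v, u ∈ Set.range x) :
    ∃ i, Finset.univ.image (Function.update x i v) = s := by
  obtain ⟨i, hi⟩ : ∃ i, x i ∉ s.erase v := by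
    by_contra! hall
    have hcard : (Finset.univ.image x).card ≤ (s.erase v).card :=
      Finset.card_le_card (Finset.image_subset_iff.2 fun i _ => hall i)
    rw [Finset.card_image_of_injective _ hx, Finset.card_erase_of_mem hv, hs] at hcard
    simp at hcard
  have hsub : s ⊆ Finset.univ.image (Function.update x i v) := by
    intro u hu
    rcases eq_or_ne u v with rfl | huv
    · exact Finset.mem_image.2 ⟨i, Finset.mem_univ i, Function.update_self i u x⟩
    · have hu' := Finset.mem_erase.2 ⟨huv, hu⟩
      obtain ⟨j, rfl⟩ := hsx u hu'
      have hji : j ≠ i := fun h => hi (h ▸ hu')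
      exact Finset.mem_image.2 ⟨j, Finset.mem_univ j, Function.update_of_ne hji v x⟩
  refine ⟨i, (Finset.eq_of_subset_of_card_le hsub ?_).symm⟩
  rw [hs]
  exact Finset.card_image_le

/-- The triangles present after a new vertex `v` has been joined to the vertices of `x`. -/
def stack (L : Finset (Fin 3 → V)) (x : Fin 3 → V) (v : V) : Finset (Fin 3 → V) :=
  L ∪ Finset.univ.image fun i => Function.update x i v

theorem mem_stack_of_mem {L : Finset (Fin 3 → V)} {y : Fin 3 → V} (hy : y ∈ L) :
    y ∈ stack L x v :=
  Finset.mem_union_left _ hy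

theorem update_mem_stack (L : Finset (Fin 3 → V)) (x : Fin 3 → V) (v : V) (i : Fin 3) :
    Function.update x i v ∈ stack L x v :=
  Finset.mem_union_right _ (Finset.mem_image_of_mem _ (Finset.mem_univ i))

theorem forall_mem_stack {L : Finset (Fin 3 → V)} {P : (Fin 3 → V) → Prop} :
    (∀ y ∈ stack L x v, P y) ↔ (∀ y ∈ L, P y) ∧ ∀ i, P (Function.update x i v) := by
  simp [stack, or_imp, forall_and]

theorem sum_stack {L : Finset (Fin 3 → V)} (hL : ∀ y ∈ L, v ∉ Set.range y) (hx : x ∈ L)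
    {M : Type*} [AddCommMonoid M] (g : (Fin 3 → V) → M) :
    ∑ y ∈ stack L x v, g y = ∑ y ∈ L, g y + ∑ i, g (Function.update x i v) := by
  rw [stack, Finset.sum_union, Finset.sum_image (update_injective_index (hL x hx)).injOn]
  refine Finset.disjoint_right.2 fun y hy hyL => ?_
  obtain ⟨i, -, rfl⟩ := Finset.mem_image.1 hy
  exact hL _ hyL ⟨i, Function.update_self i v x⟩

/-- `IsStacked G W L` says that the subgraph of `G` on `W` is a 3-tree, and that `L` lists its
triangles, each with one ordering of its vertices. -/
inductive IsStacked (G : SimpleGraph V) : Finset V → Finset (Fin 3 → V) → Prop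
  | base {x : Fin 3 → V} (hx : Pairwise fun i j => G.Adj (x i) (x j)) :
      IsStacked G (Finset.univ.image x) {x}
  | step {W : Finset V} {L : Finset (Fin 3 → V)} {x : Fin 3 → V} {v : V} (h : IsStacked G W L)
      (hx : x ∈ L) (hv : v ∉ W) (hadj : ∀ u ∈ W, G.Adj v u ↔ u ∈ Set.range x) :
      IsStacked G (insert v W) (stack L x v)

namespace IsStacked

variable {W : Finset V} {L : Finset (Fin 3 → V)}

theorem apply_mem (h : IsStacked G W L) : ∀ y ∈ L, ∀ i, y i ∈ W := by
  induction h with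
  | base => simp
  | @step W L x v _ hx _ _ ih =>
    refine forall_mem_stack.2
      ⟨fun y hy i => Finset.mem_insert_of_mem (ih y hy i), fun i j => ?_⟩
    rcases eq_or_ne j i with rfl | hji
    · simp
    · simpa [Function.update_of_ne hji] using Or.inr (ih x hx j)

theorem notMem_range (h : IsStacked G W L) (hv : v ∉ W) : ∀ y ∈ L, v ∉ Set.range y := by
  rintro y hy ⟨i, rfl⟩
  exact hv (h.apply_mem y hy i)

theorem pairwise_adj (h : IsStacked G W L) :
    ∀ y ∈ L, Pairwise fun i j => G.Adj (y i) (y j) := by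
  induction h with
  | base hx => simpa using hx
  | @step W L x v h hx _ hadj ih =>
    exact forall_mem_stack.2 ⟨ih, pairwise_adj_update (ih x hx) fun i =>
      (hadj (x i) (h.apply_mem x hx i)).2 ⟨i, rfl⟩⟩

theorem exists_image_eq (h : IsStacked G W L) :
    ∀ s : Finset V, G.IsNClique 3 s → s ⊆ W → ∃ y ∈ L, Finset.univ.image y = s := by
  induction h with
  | @base x _ =>
    intro s hs hsW
    refine ⟨x, Finset.mem_singleton_self x, (Finset.eq_of_subset_of_card_le hsW ?_).symm⟩
    rw [hs.card_eq]
    exact Finset.card_image_le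
  | @step W L x v h hx _ hadj ih =>
    intro s hs hsW
    by_cases hvs : v ∉ s
    · obtain ⟨y, hy, rfl⟩ := ih s hs ((Finset.subset_insert_iff_of_notMem hvs).1 hsW)
      exact ⟨y, mem_stack_of_mem hy, rfl⟩
    rw [not_not] at hvs
    obtain ⟨i, hi⟩ := exists_image_update_eq
      (injective_of_pairwise_adj (h.pairwise_adj x hx)) hs.card_eq hvs fun u hu =>
        have hu := Finset.mem_erase.1 hu
        (hadj u ((Finset.mem_insert.1 (hsW hu.2)).resolve_left hu.1)).1
          (hs.isClique hvs hu.2 hu.1.symm)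
    exact ⟨_, update_mem_stack L x v i, hi⟩

end IsStacked

theorem Is3Tree.exists_isStacked [Fintype V] (h : Is3Tree G) : ∃ L, IsStacked G Finset.univ L := by
  obtain ⟨n, e, hbase, hstep⟩ := h
  have hprefix : ∀ m ≤ n, ∃ L, IsStacked G ({v | (e.symm v : ℕ) < m + 3} : Finset V) L := by
    intro m
    induction m with
    | zero =>
      intro _
      let x (i : Fin 3) : V := e (i.castLE (Nat.le_add_left 3 n))
      have hx : Finset.univ.image x = ({v | (e.symm v : ℕ) < 0 + 3} : Finset V) := by
        ext v
        simp only [Finset.mem_image, Finset.mem_univ, true_and, Finset.mem_filter_univ]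
        constructor
        · rintro ⟨i, rfl⟩
          simp [x]
        · exact fun hv => ⟨⟨e.symm v, hv⟩, by simp [x]⟩
      rw [← hx]
      exact ⟨_, .base fun i j hij => hbase _ _ i.is_lt j.is_lt (by simpa using hij)⟩
    | succ m ih =>
      intro hm
      obtain ⟨L, hL⟩ := ih (by omega)
      obtain ⟨s, hs, hsub, hadj⟩ := hstep ⟨m + 3, by omega⟩ (by simp)
      obtain ⟨x, hx, rfl⟩ := hL.exists_image_eq s hs fun v hv => by
        obtain ⟨i, hi, rfl⟩ := hsub v hv
        simpa using hi
      have hinsert : ({v | (e.symm v : ℕ) < m + 1 + 3} : Finset V) =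
          insert (e ⟨m + 3, by omega⟩) ({v | (e.symm v : ℕ) < m + 3} : Finset V) := by
        ext v
        simp only [Finset.mem_filter_univ, Finset.mem_insert, ← Equiv.symm_apply_eq, Fin.ext_iff]
        omega
      rw [hinsert]
      refine ⟨_, hL.step hx (by simp) fun u hu => ?_⟩
      have := hadj (e.symm u) (by simpa using hu)
      simpa using this
  obtain ⟨L, hL⟩ := hprefix n le_rfl
  have huniv : ({v | (e.symm v : ℕ) < n + 3} : Finset V) = Finset.univ := by simp
  exact ⟨L, huniv ▸ hL⟩

end Stacked

theorem IsTriangleTransversal.tau_le_card {G : SimpleGraph V} {X : Finset (Sym2 V)}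
    (h : IsTriangleTransversal G X) : tau G ≤ X.card :=
  Nat.sInf_le ⟨X, h, rfl⟩

theorem IsTrianglePacking.card_le_nu [Finite V] {G : SimpleGraph V} {Y : Finset (Finset V)}
    (h : IsTrianglePacking G Y) : Y.card ≤ nu G := by
  have := Fintype.ofFinite V
  refine le_csSup ⟨Fintype.card (Finset V), ?_⟩ ⟨Y, h, rfl⟩
  rintro _ ⟨Y, -, rfl⟩
  exact Y.card_le_univ

theorem sum_apply_update_of_mem {ι β M : Type*} [DecidableEq ι] [AddCommMonoid M] {s : Finset ι}
    {i : ι} (hi : i ∈ s) (g : ι → β → M) (f : ι → β) (b : β) :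
    ∑ j ∈ s, g j (Function.update f i b j) = g i b + ∑ j ∈ s.erase i, g j (f j) := by
  rw [← Finset.add_sum_erase s _ hi, Function.update_self]
  congr 1
  exact Finset.sum_congr rfl fun j hj => by
    rw [Function.update_of_ne (Finset.ne_of_mem_erase hj)]

section Reassign

variable {f : Sym2 V → Fin 3 → V} {x : Fin 3 → V} {v : V} {Y : Finset (Fin 3)} {o : Fin 3 → Fin 3}

/-- The assignment of edges to triangles that agrees with `f` except that, around a vertex `v`
stacked on `x`, the side `i ∈ Y` of `x` and the spoke `k` are given to the triangles with `v` in
place of `x i` and `x (o k)`, respectively. -/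
noncomputable def reassign (f : Sym2 V → Fin 3 → V) (x : Fin 3 → V) (v : V) (Y : Finset (Fin 3))
    (o : Fin 3 → Fin 3) : Sym2 V → Fin 3 → V :=
  Function.extend (fun k => s(v, x k)) (fun k => Function.update x (o k) v)
    (Function.extend (side x)
      (fun i => if i ∈ Y then Function.update x i v else f (side x i)) f)

theorem reassign_spoke (hx : x.Injective) (k : Fin 3) :
    reassign f x v Y o s(v, x k) = Function.update x (o k) v :=
  (spoke_injective hx v).extend_apply _ _ k

theorem reassign_of_notMem {e : Sym2 V} (he : v ∉ e) :
    reassign f x v Y o e = Function.extend (side x)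
      (fun i => if i ∈ Y then Function.update x i v else f (side x i)) f e :=
  Function.extend_apply' _ _ _ fun ⟨k, hk⟩ => he (hk ▸ Sym2.mem_mk_left v (x k))

theorem reassign_side (hx : x.Injective) (hv : v ∉ Set.range x) (i : Fin 3) :
    reassign f x v Y o (side x i) = if i ∈ Y then Function.update x i v else f (side x i) := by
  rw [reassign_of_notMem (notMem_side hv i), (side_injective hx).extend_apply]

variable [DecidableEq V]

theorem corner_subset_sidesOwned_reassign (hx : x.Injective) (hv : v ∉ Set.range x) (i : Fin 3) :
    corner i Y {k | o k = i} ⊆ sidesOwned (reassign f x v Y o) (Function.update x i v) := by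
  intro j hj
  rw [corner, Finset.mem_filter_univ] at hj
  rw [sidesOwned, Finset.mem_filter_univ]
  split_ifs at hj with hji
  · rw [hji, side_update_self, reassign_side hx hv, if_pos hj]
  · rw [side_update_of_ne x v hji, reassign_spoke hx, (Finset.mem_filter_univ _).1 hj]

theorem sdiff_subset_sidesOwned_reassign (hx : x.Injective) (hv : v ∉ Set.range x) :
    sidesOwned f x \ Y ⊆ sidesOwned (reassign f x v Y o) x := by
  intro i hi
  obtain ⟨hi, hiY⟩ := Finset.mem_sdiff.1 hi
  rw [sidesOwned, Finset.mem_filter_univ] at hi ⊢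
  rw [reassign_side hx hv, if_neg hiY, hi]

theorem sidesOwned_subset_sidesOwned_reassign {y : Fin 3 → V} (hx : x.Injective)
    (hv : v ∉ Set.range x) (hvy : v ∉ Set.range y) (hyx : y ≠ x) (hY : Y ⊆ sidesOwned f x) :
    sidesOwned f y ⊆ sidesOwned (reassign f x v Y o) y := by
  intro i hi
  rw [sidesOwned, Finset.mem_filter_univ] at hi ⊢
  by_cases hside : ∃ k, side x k = side y i
  · obtain ⟨k, hk⟩ := hside
    have hkY : k ∉ Y := fun hkY => hyx (by rw [← hi, ← hk, (Finset.mem_filter_univ k).1 (hY hkY)])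
    rw [← hk, reassign_side hx hv, if_neg hkY, hk, hi]
  · rw [reassign_of_notMem (notMem_side hvy i), Function.extend_apply' _ _ _ hside, hi]

end Reassign

section Bounds

variable [DecidableEq V] {G : SimpleGraph V} {L : Finset (Fin 3 → V)} {x : Fin 3 → V} {v : V}
  {σ : (Fin 3 → V) → Gadget}

/-- Once `F` meets all triangles in `L`, the triangles of `G` can be destroyed at the total cost of
the gadgets `σ` on `L` and `t` further edges. -/
def TransversalBound (G : SimpleGraph V) (L : Finset (Fin 3 → V))
    (σ : (Fin 3 → V) → Gadget) (t : ℕ) : Prop :=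
  ∀ F : Finset (Sym2 V), ↑F ⊆ G.edgeSet → (∀ x ∈ L, (sidesIn F x).Nonempty) →
    tau G ≤ F.card + ∑ x ∈ L, (σ x).cost (sidesIn F x) + t

/-- However the edges are assigned to the triangles in `L`, the graph `G` has a packing with the
total gain of the gadgets `σ` on `L` and `p` further triangles. -/
def PackingBound (G : SimpleGraph V) (L : Finset (Fin 3 → V))
    (σ : (Fin 3 → V) → Gadget) (p : ℕ) : Prop :=
  ∀ f : Sym2 V → Fin 3 → V, ∑ x ∈ L, (σ x).closedGain (sidesOwned f x) + p ≤ nu G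

theorem IsStacked.transversalBound_zero [Fintype V] (h : IsStacked G Finset.univ L) :
    TransversalBound G L (fun _ => ⟨0, none⟩) 0 := by
  intro F hF hmeet
  have htransversal : IsTriangleTransversal G F := by
    refine ⟨hF, fun s hs => ?_⟩
    obtain ⟨x, hx, rfl⟩ := h.exists_image_eq s hs (Finset.subset_univ s)
    obtain ⟨i, hi⟩ := hmeet x hx
    refine ⟨side x i, (Finset.mem_filter_univ i).1 hi, fun u hu => ?_⟩
    rcases Sym2.mem_iff.1 hu with rfl | rfl <;> exact Finset.mem_image_of_mem x (Finset.mem_univ _)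
  have := htransversal.tau_le_card
  omega

theorem apply_eq_of_sidesOwned_eq_univ {f : Sym2 V → Fin 3 → V}
    (hf : sidesOwned f x = Finset.univ) {u w : V} (huw : u ≠ w)
    (hu : u ∈ Finset.univ.image x) (hw : w ∈ Finset.univ.image x) : f s(u, w) = x := by
  obtain ⟨i, -, rfl⟩ := Finset.mem_image.1 hu
  obtain ⟨j, -, rfl⟩ := Finset.mem_image.1 hw
  have hmem : -(i + j) ∈ sidesOwned f x := hf ▸ Finset.mem_univ _
  rw [sidesOwned, Finset.mem_filter_univ] at hmem
  rwa [← side_third x (ne_of_apply_ne x huw)]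

theorem IsStacked.packingBound_zero [Fintype V] (h : IsStacked G Finset.univ L) :
    PackingBound G L (fun _ => ⟨0, none⟩) 0 := by
  intro f
  set M := L.filter fun x => sidesOwned f x = Finset.univ with hM
  have hadj {x} (hx : x ∈ M) := h.pairwise_adj x (Finset.mem_filter.1 hx).1
  have howner {x} (hx : x ∈ M) {u w : V} := apply_eq_of_sidesOwned_eq_univ (u := u) (w := w)
    (Finset.mem_filter.1 hx).2
  have hinj : Set.InjOn (fun x : Fin 3 → V => Finset.univ.image x) M := by
    intro x hx y hy (hxy : Finset.univ.image x = Finset.univ.image y)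
    have hmem (i : Fin 3) : x i ∈ Finset.univ.image x :=
      Finset.mem_image_of_mem x (Finset.mem_univ i)
    have h01 : x 0 ≠ x 1 := (hadj hx (by decide)).ne
    rw [← howner hx h01 (hmem 0) (hmem 1), howner hy h01 (hxy ▸ hmem 0) (hxy ▸ hmem 1)]
  have hpack : IsTrianglePacking G (M.image fun x => Finset.univ.image x) := by
    simp only [IsTrianglePacking, Finset.forall_mem_image]
    refine ⟨fun x hx => isNClique_image_of_pairwise_adj (hadj hx), fun x hx y hy hxy e he => ?_⟩
    induction e with
    | _ u w =>
      rintro ⟨hex, hey⟩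
      have hne := G.ne_of_adj (G.mem_edgeSet.1 he)
      have hfx := howner hx hne (hex u (Sym2.mem_mk_left u w)) (hex w (Sym2.mem_mk_right u w))
      have hfy := howner hy hne (hey u (Sym2.mem_mk_left u w)) (hey w (Sym2.mem_mk_right u w))
      exact hxy (by rw [← hfx, hfy])
  have hcard := hpack.card_le_nu
  rw [Finset.card_image_of_injOn hinj, hM, Finset.card_filter] at hcard
  simpa [Gadget.closedGain, Gadget.gain] using hcard

theorem exists_glue_deletion {F : Finset (Sym2 V)} (hF : ↑F ⊆ G.edgeSet)
    (hx : Pairwise fun i j => G.Adj (x i) (x j)) (hmeet : (sidesIn F x).Nonempty) (A B : Gadget) :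
    ∃ F', F ⊆ F' ∧ ↑F' ⊆ G.edgeSet ∧
      F'.card + A.cost (sidesIn F' x) + B.cost (sidesIn F' x) ≤
        F.card + (A.glue B).cost (sidesIn F x) := by
  obtain ⟨X, hX⟩ := A.exists_cost_le_cost_glue B hmeet
  have hFX : F ⊆ F ∪ X.image (side x) := Finset.subset_union_left
  have hsides : sidesIn F x ∪ X ⊆ sidesIn (F ∪ X.image (side x)) x :=
    Finset.union_subset (sidesIn_mono x hFX)
      ((subset_sidesIn_image x X).trans (sidesIn_mono x Finset.subset_union_right))
  refine ⟨_, hFX, ?_, ?_⟩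
  · rw [Finset.coe_union, Finset.coe_image]
    exact Set.union_subset hF (Set.image_subset_iff.2 fun i _ => side_mem_edgeSet hx i)
  · have hA := A.cost_antitone hsides
    have hB := B.cost_antitone hsides
    have hcard := Finset.card_union_le F (X.image (side x))
    have hcardX := X.card_image_le (f := side x)
    omega

theorem exists_attach_deletion {F : Finset (Sym2 V)} (hF : ↑F ⊆ G.edgeSet)
    (hv : ∀ i, G.Adj v (x i)) (hmeet : (sidesIn F x).Nonempty) {A : Fin 3 → Gadget} {R : Gadget}
    {t : ℕ} (hR : Gadget.AttachCost A R t) :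
    ∃ F', F ⊆ F' ∧ ↑F' ⊆ G.edgeSet ∧ (∀ i, (sidesIn F' (Function.update x i v)).Nonempty) ∧
      F'.card + ∑ i, (A i).cost (sidesIn F' (Function.update x i v)) ≤
        F.card + R.cost (sidesIn F x) + t := by
  obtain ⟨S, hSmeet, hS⟩ := hR _ hmeet
  have hcorner (i : Fin 3) := corner_subset_sidesIn F x v i S
  refine ⟨_, Finset.subset_union_left, ?_, fun i => (hSmeet i).mono (hcorner i), ?_⟩
  · rw [Finset.coe_union, Finset.coe_image]
    exact Set.union_subset hF (Set.image_subset_iff.2 fun i _ => hv i)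
  · have hcost := Finset.sum_le_sum fun i (_ : i ∈ Finset.univ) =>
      (A i).cost_antitone (hcorner i)
    have hcard := Finset.card_union_le F (S.image fun k => s(v, x k))
    have hcardS := S.card_image_le (f := fun k => s(v, x k))
    omega

theorem TransversalBound.of_stack {t t₁ : ℕ} {R : Gadget}
    (h : TransversalBound G (stack L x v) σ t) (hL : ∀ y ∈ L, v ∉ Set.range y) (hx : x ∈ L)
    (hadj : Pairwise fun i j => G.Adj (x i) (x j)) (hv : ∀ i, G.Adj v (x i))
    (hR : Gadget.AttachCost (fun i => σ (Function.update x i v)) R t₁) :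
    TransversalBound G L (Function.update σ x ((σ x).glue R)) (t + t₁) := by
  intro F hF hmeet
  obtain ⟨F₁, hFF₁, hF₁, hcard₁⟩ := exists_glue_deletion hF hadj (hmeet x hx) (σ x) R
  have hmeet₁ (y) (hy : y ∈ L) := (hmeet y hy).mono (sidesIn_mono y hFF₁)
  obtain ⟨F₂, hFF₂, hF₂, hmeet₂, hcard₂⟩ := exists_attach_deletion hF₁ hv (hmeet₁ x hx) hR
  have hbound := h F₂ hF₂ (forall_mem_stack.2
    ⟨fun y hy => (hmeet₁ y hy).mono (sidesIn_mono y hFF₂), hmeet₂⟩)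
  rw [sum_stack hL hx, ← Finset.add_sum_erase L _ hx] at hbound
  have hx₂ := (σ x).cost_antitone (sidesIn_mono x hFF₂)
  have hrest : ∑ y ∈ L.erase x, (σ y).cost (sidesIn F₂ y) ≤
      ∑ y ∈ L.erase x, (σ y).cost (sidesIn F y) :=
    Finset.sum_le_sum fun y _ => (σ y).cost_antitone (sidesIn_mono y (hFF₁.trans hFF₂))
  rw [sum_apply_update_of_mem hx (fun y (A : Gadget) => A.cost (sidesIn F y))]
  omega

theorem PackingBound.of_stack {p p₁ : ℕ} {R : Gadget}
    (h : PackingBound G (stack L x v) σ p) (hL : ∀ y ∈ L, v ∉ Set.range y) (hx : x ∈ L)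
    (hinj : x.Injective) (hR : Gadget.AttachGain (fun i => σ (Function.update x i v)) R p₁) :
    PackingBound G L (Function.update σ x ((σ x).glue R)) (p + p₁) := by
  intro f
  obtain ⟨Y, hY, hglue⟩ := (σ x).exists_closedGain_glue_le R (sidesOwned f x)
  obtain ⟨o, ho⟩ := hR Y
  have hbound := h (reassign f x v Y o)
  rw [sum_stack hL hx, ← Finset.add_sum_erase L _ hx] at hbound
  have hxv := hL x hx
  have hxgain := (σ x).closedGain_monotone
    (sdiff_subset_sidesOwned_reassign (f := f) (Y := Y) (o := o) hinj hxv)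
  have hspokes : R.gain Y + p₁ ≤ ∑ i, (σ (Function.update x i v)).closedGain
      (sidesOwned (reassign f x v Y o) (Function.update x i v)) :=
    ho.trans (Finset.sum_le_sum fun i _ => Gadget.closedGain_monotone _
      (corner_subset_sidesOwned_reassign hinj hxv i))
  have hrest : ∑ y ∈ L.erase x, (σ y).closedGain (sidesOwned f y) ≤
      ∑ y ∈ L.erase x, (σ y).closedGain (sidesOwned (reassign f x v Y o) y) :=
    Finset.sum_le_sum fun y hy => (σ y).closedGain_monotone
      (sidesOwned_subset_sidesOwned_reassign hinj hxv (hL y (Finset.mem_of_mem_erase hy))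
        (Finset.ne_of_mem_erase hy) hY)
  rw [sum_apply_update_of_mem hx (fun y (A : Gadget) => A.closedGain (sidesOwned f y))]
  omega

theorem five_mul_tau_le_of_bounds_singleton (hx : Pairwise fun i j => G.Adj (x i) (x j)) {t p : ℕ}
    (hτ : TransversalBound G {x} σ t) (hν : PackingBound G {x} σ p)
    (hcredit : 5 * t + (σ x).credit ≤ 9 * p) : 5 * tau G ≤ 9 * nu G + 1 := by
  have hτ' : tau G ≤ 1 + (σ x).cost (sidesIn {side x 0} x) + t := by
    simpa using hτ {side x 0} (by simpa using side_mem_edgeSet hx 0)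
      (by simpa using ⟨0, by simp [sidesIn]⟩)
  have hν' : (σ x).closedGain Finset.univ + p ≤ nu G := by
    simpa [sidesOwned] using hν fun _ => x
  have hcost := (σ x).cost_le_cap (sidesIn {side x 0} x)
  have hfinal := (σ x).five_mul_cap_add_one_le
  omega

theorem IsStacked.five_mul_tau_le {W : Finset V} (hG : IsStacked G W L) {t p : ℕ}
    (hτ : TransversalBound G L σ t) (hν : PackingBound G L σ p)
    (hcredit : 5 * t + ∑ x ∈ L, (σ x).credit ≤ 9 * p) : 5 * tau G ≤ 9 * nu G + 1 := by
  induction hG generalizing σ t p with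
  | base hx =>
    rw [Finset.sum_singleton] at hcredit
    exact five_mul_tau_le_of_bounds_singleton hx hτ hν hcredit
  | @step W L x v hG hx hv hadj ih =>
    have hL := hG.notMem_range hv
    have hxadj := hG.pairwise_adj x hx
    have hvx (i : Fin 3) : G.Adj v (x i) := (hadj (x i) (hG.apply_mem x hx i)).2 ⟨i, rfl⟩
    obtain ⟨R, t₁, p₁, hR, hRτ, hRν⟩ := Gadget.exists_attach fun i => σ (Function.update x i v)
    refine ih (hτ.of_stack hL hx hxadj hvx hRτ)
      (hν.of_stack hL hx (injective_of_pairwise_adj hxadj) hRν) ?_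
    rw [sum_stack hL hx, ← Finset.add_sum_erase L _ hx] at hcredit
    rw [sum_apply_update_of_mem hx (fun _ (A : Gadget) => A.credit)]
    have hglue := (σ x).credit_glue_le R
    omega

end Bounds

/-- If `G` is a 3-tree, then `τ(G) ≤ (9/5)·ν(G) + 1/5`. -/
theorem tuza_nine_fifths_of_three_tree (V : Type) [Fintype V] (G : SimpleGraph V)
    (h3 : Is3Tree G) : 5 * tau G ≤ 9 * nu G + 1 := by
  classical
  obtain ⟨L, hL⟩ := h3.exists_isStacked
  exact hL.five_mul_tau_le hL.transversalBound_zero hL.packingBound_zero (by simp [Gadget.credit])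
end

section
/- If G is a chordal graph containing no K8 subgraph (K8-free), then τ(G) ≤ 2·ν(G). -/
open SimpleGraph

variable {V : Type*}

/-- A graph is chordal if it has no induced cycle of length at least four. -/
def IsChordal (G : SimpleGraph V) : Prop :=
  ∀ n : ℕ, 4 ≤ n → IsEmpty (SimpleGraph.cycleGraph n ↪g G)

/-! We prove the bound for every subgraph `G` of a fixed `K₈`-free chordal graph `H`, so that edges
may be deleted. In a minimal counterexample `G` every edge lies in a triangle, and `G` is
irreducible: no `k ≥ 1` edge-disjoint triangles come with `2k` edges which meet every triangle
sharing an edge with one of them. Irreducibility forces the neighbourhood of a vertex of degree at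
most six to be a clique minus a small matching; call such a vertex tight.

In a perfect elimination order of `H` each vertex has at most six later neighbours. Let `u` be the
first vertex of this order with an earlier neighbour in `G`. Its earlier neighbours in `G` are
tight, pairwise nonadjacent, and share with `u` a set of at most six later vertices which contains
all their neighbours other than `u`. Counting neighbours in this set leaves configurations with
one, two or three earlier neighbours of `u`, and each of them is reducible. Most of the triangle
packings used consist of the alternate faces of an octahedron: these four triangles cover all its
twelve edges. -/

lemma mem_edgeSet_of_isClique {G : SimpleGraph V} {t : Set V} (ht : G.IsClique t) {e : Sym2 V}
    (he : ¬ e.IsDiag) (het : ∀ v ∈ e, v ∈ t) : e ∈ G.edgeSet := by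
  induction e with
  | _ a b => exact ht (het a (by simp)) (het b (by simp)) he

lemma exists_mem_edgeSet_of_isNClique_three {G : SimpleGraph V} {t : Finset V}
    (ht : G.IsNClique 3 t) : ∃ e ∈ G.edgeSet, ∀ v ∈ e, v ∈ t := by
  classical
  obtain ⟨a, b, c, hab, -, -, rfl⟩ := is3Clique_iff.1 ht
  exact ⟨s(a, b), hab, by simp⟩

lemma exists_mem_ne_ne_of_isNClique_three {G : SimpleGraph V} {t : Finset V}
    (ht : G.IsNClique 3 t) (a b : V) : ∃ c ∈ t, c ≠ a ∧ c ≠ b := by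
  classical
  have hcard : ({a, b} : Finset V).card < t.card :=
    Finset.card_le_two.trans_lt (by rw [ht.card_eq]; norm_num)
  obtain ⟨c, hc, hcab⟩ := Finset.exists_mem_notMem_of_card_lt_card hcard
  exact ⟨c, hc, by simpa only [Finset.mem_insert, Finset.mem_singleton, not_or] using hcab⟩

lemma deleteEdges_lt {G : SimpleGraph V} {E : Set (Sym2 V)} {e : Sym2 V} (heE : e ∈ E)
    (he : e ∈ G.edgeSet) : G.deleteEdges E < G := by
  refine lt_of_le_of_ne (G.deleteEdges_le E) fun heq => ?_
  rw [← heq, edgeSet_deleteEdges] at he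
  exact he.2 heE

/-! ### Reductions -/

/-- `G` has a triangle transversal at most twice as large as some triangle packing. -/
def TuzaBound (G : SimpleGraph V) : Prop :=
  ∃ (X : Finset (Sym2 V)) (Y : Finset (Finset V)), IsTriangleTransversal G X ∧
    IsTrianglePacking G Y ∧ X.card ≤ 2 * Y.card

lemma TuzaBound.tau_le [Finite V] {G : SimpleGraph V} (h : TuzaBound G) :
    tau G ≤ 2 * nu G := by
  classical
  have := Fintype.ofFinite V
  obtain ⟨X, Y, hX, hY, hle⟩ := h
  have htau : tau G ≤ X.card := Nat.sInf_le ⟨X, hX, rfl⟩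
  have hnu : Y.card ≤ nu G := by
    refine le_csSup ⟨(Finset.univ : Finset (Finset V)).card, ?_⟩ ⟨Y, hY, rfl⟩
    rintro _ ⟨Z, -, rfl⟩
    exact Finset.card_le_univ Z
  omega

lemma IsTrianglePacking.union [DecidableEq V] {G : SimpleGraph V} {E : Set (Sym2 V)}
    {Y Y' : Finset (Finset V)} (hY : IsTrianglePacking G Y)
    (hYE : ∀ t ∈ Y, ∀ e ∈ G.edgeSet, (∀ v ∈ e, v ∈ t) → e ∈ E)
    (hY' : IsTrianglePacking (G.deleteEdges E) Y') :
    IsTrianglePacking G (Y ∪ Y') ∧ Disjoint Y Y' := by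
  have hle : G.deleteEdges E ≤ G := G.deleteEdges_le E
  have hedge : ∀ t ∈ Y', ∀ e ∈ G.edgeSet, (∀ v ∈ e, v ∈ t) → e ∈ (G.deleteEdges E).edgeSet :=
    fun t ht e he het => mem_edgeSet_of_isClique (hY'.1 t ht).isClique
      (G.not_isDiag_of_mem_edgeSet he) het
  have hcross : ∀ s ∈ Y, ∀ t ∈ Y', ∀ e ∈ G.edgeSet,
      ¬ ((∀ v ∈ e, v ∈ s) ∧ (∀ v ∈ e, v ∈ t)) := by
    rintro s hs t ht e he ⟨hes, het⟩
    have := hedge t ht e he het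
    rw [edgeSet_deleteEdges] at this
    exact this.2 (hYE s hs e he hes)
  refine ⟨⟨fun t ht => ?_, fun s hs t ht hst e he => ?_⟩, ?_⟩
  · rcases Finset.mem_union.1 ht with ht | ht
    · exact hY.1 t ht
    · exact (hY'.1 t ht).mono hle
  · rcases Finset.mem_union.1 hs with hs | hs <;> rcases Finset.mem_union.1 ht with ht | ht
    · exact hY.2 s hs t ht hst e he
    · exact hcross s hs t ht e he
    · exact fun h => hcross t ht s hs e he h.symm
    · exact fun h => hY'.2 s hs t ht hst e (hedge s hs e he h.1) h
  · refine Finset.disjoint_left.2 fun t ht ht' => ?_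
    obtain ⟨e, he, het⟩ := exists_mem_edgeSet_of_isNClique_three (hY.1 t ht)
    exact hcross t ht t ht' e he ⟨het, het⟩

lemma TuzaBound.of_deleteEdges {G : SimpleGraph V} {E : Set (Sym2 V)} {X : Finset (Sym2 V)}
    {Y : Finset (Finset V)} (hX : ↑X ⊆ G.edgeSet) (hY : IsTrianglePacking G Y)
    (hXY : X.card ≤ 2 * Y.card) (hYE : ∀ t ∈ Y, ∀ e ∈ G.edgeSet, (∀ v ∈ e, v ∈ t) → e ∈ E)
    (hE : ∀ t, G.IsNClique 3 t → ∀ e ∈ E, e ∈ G.edgeSet → (∀ v ∈ e, v ∈ t) →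
      ∃ e ∈ X, ∀ v ∈ e, v ∈ t)
    (h : TuzaBound (G.deleteEdges E)) : TuzaBound G := by
  classical
  obtain ⟨X', Y', ⟨hX', hXt'⟩, hY', hXY'⟩ := h
  obtain ⟨hpack, hdisj⟩ := hY.union hYE hY'
  refine ⟨X ∪ X', Y ∪ Y', ⟨?_, fun t ht => ?_⟩, hpack, ?_⟩
  · rw [Finset.coe_union]
    exact Set.union_subset hX (hX'.trans (edgeSet_mono (G.deleteEdges_le E)))
  · by_cases hit : ∃ e ∈ E, e ∈ G.edgeSet ∧ ∀ v ∈ e, v ∈ t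
    · obtain ⟨e, heE, he, het⟩ := hit
      obtain ⟨e', he', het'⟩ := hE t ht e heE he het
      exact ⟨e', Finset.mem_union_left _ he', het'⟩
    · obtain ⟨e, he, het⟩ := hXt' t ⟨fun a ha b hb hab => deleteEdges_adj.2
        ⟨ht.isClique ha hb hab, fun hmem => hit ⟨_, hmem, ht.isClique ha hb hab, fun v hv => by
          rcases Sym2.mem_iff.1 hv with rfl | rfl <;> assumption⟩⟩, ht.card_eq⟩
      exact ⟨e, Finset.mem_union_right _ he, het⟩
  · have := Finset.card_union_le X X'
    rw [Finset.card_union_of_disjoint hdisj]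
    omega

/-- A local reduction for Tuza's conjecture: edges `X` and a nonempty triangle packing `Y` with
`|X| ≤ 2 |Y|` such that `X` meets every triangle sharing an edge with a triangle in `Y`. It is
convenient to let `X` contain pairs that are not edges. -/
def Reducible (G : SimpleGraph V) : Prop :=
  ∃ (X : Finset (Sym2 V)) (Y : Finset (Finset V)), Y.Nonempty ∧ X.card ≤ 2 * Y.card ∧
    IsTrianglePacking G Y ∧
    ∀ t ∈ Y, ∀ a ∈ t, ∀ b ∈ t, G.Adj a b → ∀ c, G.Adj a c → G.Adj b c →
      s(a, b) ∈ X ∨ s(a, c) ∈ X ∨ s(b, c) ∈ X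

/-- Every edge of `G` lies in a triangle. -/
def EdgesInTriangles (G : SimpleGraph V) : Prop :=
  ∀ ⦃a b⦄, G.Adj a b → ∃ c, G.Adj a c ∧ G.Adj b c

lemma Reducible.tuzaBound {G : SimpleGraph V} (h : Reducible G)
    (ih : ∀ G' < G, TuzaBound G') : TuzaBound G := by
  classical
  obtain ⟨X, Y, ⟨t₀, ht₀⟩, hXY, hY, hkill⟩ := h
  let E : Set (Sym2 V) := {e | ∃ t ∈ Y, ∀ v ∈ e, v ∈ t}
  obtain ⟨e₀, he₀, het₀⟩ := exists_mem_edgeSet_of_isNClique_three (hY.1 t₀ ht₀)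
  refine TuzaBound.of_deleteEdges (E := E) (X := X.filter (· ∈ G.edgeSet)) (fun e he => ?_) hY
    ((Finset.card_filter_le _ _).trans hXY) (fun t ht e _ het => ⟨t, ht, het⟩) ?_
    (ih _ (deleteEdges_lt (e := e₀) ⟨t₀, ht₀, het₀⟩ he₀))
  · exact (Finset.mem_filter.1 (Finset.mem_coe.1 he)).2
  · rintro t ht ⟨a, b⟩ ⟨s, hs, hes⟩ (hab : G.Adj a b) het
    have ha : a ∈ t := het a (Sym2.mem_mk_left a b)
    have hb : b ∈ t := het b (Sym2.mem_mk_right a b)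
    obtain ⟨c, hc, hca, hcb⟩ := exists_mem_ne_ne_of_isNClique_three ht a b
    have hac := ht.isClique ha hc hca.symm
    have hbc := ht.isClique hb hc hcb.symm
    rcases hkill s hs a (hes a (Sym2.mem_mk_left a b)) b (hes b (Sym2.mem_mk_right a b)) hab c
      hac hbc with h | h | h
    · exact ⟨_, Finset.mem_filter.2 ⟨h, hab⟩, by simp [ha, hb]⟩
    · exact ⟨_, Finset.mem_filter.2 ⟨h, hac⟩, by simp [ha, hc]⟩
    · exact ⟨_, Finset.mem_filter.2 ⟨h, hbc⟩, by simp [hb, hc]⟩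

lemma edgesInTriangles_of_not_tuzaBound {G : SimpleGraph V} (h : ¬ TuzaBound G)
    (ih : ∀ G' < G, TuzaBound G') : EdgesInTriangles G := by
  classical
  intro a b hab
  by_contra! hno
  refine h (TuzaBound.of_deleteEdges (E := {s(a, b)}) (X := ∅) (Y := ∅) (by simp)
    (by simp [IsTrianglePacking]) (by simp) (by simp) ?_ (ih _ (deleteEdges_lt rfl hab)))
  rintro t ht _ rfl - het
  obtain ⟨c, hc, hca, hcb⟩ := exists_mem_ne_ne_of_isNClique_three ht a b
  exact (hno c (ht.isClique (het a (by simp)) hc hca.symm)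
    (ht.isClique (het b (by simp)) hc hcb.symm)).elim

/-! ### Reductions on a fixed set of labels -/

section Scheme

variable {ι : Type*} [DecidableEq ι] {k : ℕ}

/-- A reduction drawn on abstract labels: the triangles `Y` are edge-disjoint, and every triangle
`i j m` sharing an edge `i j` with one of them contains a pair from `X`, provided that `m` is a
label. If `i` or `j` is private (belongs to `P`), all common neighbours of `i` and `j` are assumed
to be labels; otherwise `i j` itself has to be in `X`. -/
abbrev IsScheme (P : Finset ι) (X : Finset (Sym2 ι)) (Y : Fin k → Finset ι) : Prop :=
  (∀ a b, a ≠ b → (Y a ∩ Y b).card ≤ 1) ∧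
    ∀ a, ∀ i ∈ Y a, ∀ j ∈ Y a, i ≠ j → s(i, j) ∈ X ∨
      (i ∈ P ∨ j ∈ P) ∧ ∀ m, m ≠ i → m ≠ j → s(i, m) ∈ X ∨ s(j, m) ∈ X

lemma isTrianglePacking_image [DecidableEq V] {G : SimpleGraph V} {κ : Type*} [Fintype κ]
    {Y : κ → Finset V} (hY : ∀ a, G.IsNClique 3 (Y a))
    (hpair : ∀ a b, a ≠ b → (Y a ∩ Y b).card ≤ 1) :
    IsTrianglePacking G (Finset.univ.image Y) ∧
      (Finset.univ.image Y).card = Fintype.card κ := by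
  refine ⟨⟨fun t ht => ?_, fun s hs t ht hst => ?_⟩,
    Finset.card_image_of_injective _ fun a b hab => ?_⟩
  · obtain ⟨a, -, rfl⟩ := Finset.mem_image.1 ht
    exact hY a
  · obtain ⟨a, -, rfl⟩ := Finset.mem_image.1 hs
    obtain ⟨b, -, rfl⟩ := Finset.mem_image.1 ht
    rintro ⟨x, y⟩ hxy ⟨hxa, hxb⟩
    exact G.not_isDiag_of_mem_edgeSet hxy <| Finset.card_le_one.1
      (hpair a b fun h => hst (by rw [h]))
      x (Finset.mem_inter.2 ⟨hxa x (Sym2.mem_mk_left x y), hxb x (Sym2.mem_mk_left x y)⟩)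
      y (Finset.mem_inter.2 ⟨hxa y (Sym2.mem_mk_right x y), hxb y (Sym2.mem_mk_right x y)⟩)
  · by_contra hne
    have hself := hpair a b hne
    rw [← show Y a = Y b from hab, Finset.inter_self, (hY a).card_eq] at hself
    omega

section Cost

variable [Fintype ι] [Fintype V] {G : SimpleGraph V} [DecidableRel G.Adj]

lemma exists_paid_edges [DecidableEq V] (P : Finset ι) (X F : Finset (Sym2 ι)) (φ : ι → V) :
    ∃ Z : Finset (Sym2 V),
      Z.card ≤ X.card + (F.filter (·.map φ ∈ G.edgeSet)).card +
        ∑ i ∈ P, (G.neighborFinset (φ i) \ Finset.univ.image φ).card ∧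
      (∀ i j, s(i, j) ∈ X ∪ F → G.Adj (φ i) (φ j) → s(φ i, φ j) ∈ Z) ∧
      ∀ i ∈ P, ∀ x, G.Adj (φ i) x → (∃ m, φ m = x) ∨ s(φ i, x) ∈ Z := by
  refine ⟨X.image (Sym2.map φ) ∪ (F.filter (·.map φ ∈ G.edgeSet)).image (Sym2.map φ) ∪
    P.biUnion fun i => (G.neighborFinset (φ i) \ Finset.univ.image φ).image (s(φ i, ·)),
    ?_, fun i j hij hadj => ?_, fun i hi x hx => or_iff_not_imp_left.2 fun hxφ => ?_⟩
  · refine (Finset.card_union_le _ _).trans (add_le_add ((Finset.card_union_le _ _).trans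
      (add_le_add Finset.card_image_le Finset.card_image_le)) ?_)
    exact Finset.card_biUnion_le.trans (Finset.sum_le_sum fun i _ => Finset.card_image_le)
  · refine Finset.mem_union_left _ ((Finset.mem_union.1 hij).elim
      (fun hX => Finset.mem_union_left _ (Finset.mem_image_of_mem (a := s(i, j)) _ hX))
      fun hF => Finset.mem_union_right _ (Finset.mem_image_of_mem (a := s(i, j)) _ ?_))
    exact Finset.mem_filter.2 ⟨hF, hadj⟩
  · exact Finset.mem_union_right _ (Finset.mem_biUnion.2 ⟨i, hi,
      Finset.mem_image_of_mem _ (by simpa [hx] using hxφ)⟩)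

lemma ncard_neighborSet (v : V) : (G.neighborSet v).ncard = G.degree v := by
  rw [Set.ncard_eq_toFinset_card', ← card_neighborFinset_eq_degree, neighborFinset]

omit [DecidableEq ι] in
lemma card_neighborFinset_sdiff_add_sum [DecidableEq V] (G : SimpleGraph V) [DecidableRel G.Adj]
    {φ : ι → V} (hφ : φ.Injective) (v : V) :
    (G.neighborFinset v \ Finset.univ.image φ).card + ∑ m, G.adjMatrix ℕ v (φ m) = G.degree v := by
  have hinter : G.neighborFinset v ∩ Finset.univ.image φ =
      (Finset.univ.filter fun m => G.Adj v (φ m)).image φ := by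
    ext x
    simp only [Finset.mem_inter, mem_neighborFinset, Finset.mem_image, Finset.mem_univ, true_and,
      Finset.mem_filter]
    exact ⟨fun ⟨hx, m, hm⟩ => ⟨m, hm ▸ hx, hm⟩, fun ⟨m, hx, hm⟩ => ⟨hm ▸ hx, m, hm⟩⟩
  simp only [adjMatrix_apply, ← Finset.card_filter]
  rw [← Finset.card_image_of_injective _ hφ, ← hinter, Finset.card_sdiff_add_card_inter,
    card_neighborFinset_eq_degree]

omit [Fintype V] in
/-- The pairs in `F` and the edges leaving the labels at a private vertex are only paid for if they
are present in `G`. Degrees are written with `ncard` since the instance argument of `degree`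
obstructs rewriting `φ i`. -/
lemma Reducible.of_isScheme [Finite V] [NeZero k] (φ : ι → V) (P : Finset ι) (X F : Finset (Sym2 ι))
    (Y : Fin k → Finset ι) (h : IsScheme P (X ∪ F) Y) (hφ : φ.Injective)
    (hY : ∀ a, (G.comap φ).IsNClique 3 (Y a))
    (hcost : X.card + (F.filter (·.map φ ∈ G.edgeSet)).card +
      ∑ i ∈ P, (G.neighborSet (φ i)).ncard ≤ 2 * k + ∑ i ∈ P, ∑ m, G.adjMatrix ℕ (φ i) (φ m)) :
    Reducible G := by
  classical
  have := Fintype.ofFinite V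
  simp only [ncard_neighborSet, ← card_neighborFinset_sdiff_add_sum G hφ,
    Finset.sum_add_distrib] at hcost
  obtain ⟨Z, hZ, hpaid, hprivate⟩ := exists_paid_edges (G := G) P X F φ
  have hpack := isTrianglePacking_image (G := G) (Y := fun a => (Y a).map ⟨φ, hφ⟩)
    (fun a => ((hY a).map (f := ⟨φ, hφ⟩)).mono (map_comap_le _ G))
    (fun a b hab => by rw [← Finset.map_inter, Finset.card_map]; exact h.1 a b hab)
  rw [Fintype.card_fin] at hpack
  refine ⟨Z, _, by rw [← Finset.card_pos, hpack.2]; exact NeZero.pos k, by omega, hpack.1, ?_⟩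
  simp only [Finset.forall_mem_image, Finset.mem_univ, forall_const, Finset.forall_mem_map,
    Function.Embedding.coeFn_mk]
  intro a i hi j hj hij c hic hjc
  rcases h.2 a i hi j hj (fun h => hij.ne (congrArg φ h)) with hpair | ⟨hp, hthird⟩
  · exact Or.inl (hpaid i j hpair hij)
  have hc : (∃ m, φ m = c) ∨ s(φ i, c) ∈ Z ∨ s(φ j, c) ∈ Z := by
    rcases hp with hi | hj
    · exact (hprivate i hi c hic).imp_right Or.inl
    · exact (hprivate j hj c hjc).imp_right Or.inr
  rcases hc with ⟨m, rfl⟩ | hc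
  · exact Or.inr ((hthird m (fun h => hic.ne' (congrArg φ h)) fun h => hjc.ne' (congrArg φ h)).imp
      (hpaid i m · hic) (hpaid j m · hjc))
  · exact Or.inr hc

end Cost

end Scheme

/-! ### Vertices of degree at most six -/

section Crown

variable {α β : Type*} [DecidableEq β] {r : α → Finset β}

lemma card_le_card_biUnion_of_forall_ssubset {A : Finset α} (hr : ∀ a ∈ A, (r a).Nonempty)
    (hlt : ∀ B ⊂ A, B.Nonempty → B.card < (B.biUnion r).card) {B : Finset α} (hB : B ⊆ A) :
    B.card ≤ (B.biUnion r).card := by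
  classical
  rcases B.eq_empty_or_nonempty with rfl | ⟨a, ha⟩
  · simp
  rcases hB.eq_or_ssubset with rfl | hss
  · have hmono := Finset.card_le_card
      (Finset.biUnion_subset_biUnion_of_subset_left r (B.erase_subset a))
    have herase := Finset.card_erase_add_one ha
    rcases (B.erase a).eq_empty_or_nonempty with hempty | hne
    · have hpos : 0 < (B.biUnion r).card :=
        Finset.card_pos.2 ((hr a ha).mono (Finset.subset_biUnion_of_mem r ha))
      rw [hempty, Finset.card_empty] at herase
      omega
    · have := hlt _ (Finset.erase_ssubset ha) hne
      omega
  · exact (hlt B hss ⟨a, ha⟩).le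

lemma exists_injective_of_card_biUnion_le {I : Finset α} (hI : I.Nonempty)
    (hr : ∀ a ∈ I, (r a).Nonempty) (hcard : (I.biUnion r).card ≤ I.card) :
    ∃ A ⊆ I, A.Nonempty ∧ (A.biUnion r).card ≤ A.card ∧
      ∃ f : A → β, f.Injective ∧ ∀ a : A, f a ∈ r a := by
  classical
  induction I using Finset.strongInduction with
  | H I ih =>
    by_cases hproper : ∃ B ⊂ I, B.Nonempty ∧ (B.biUnion r).card ≤ B.card
    · obtain ⟨B, hBI, hB, hBcard⟩ := hproper
      obtain ⟨A, hAB, hA⟩ := ih B hBI hB (fun a ha => hr a (hBI.subset ha)) hBcard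
      exact ⟨A, hAB.trans hBI.subset, hA⟩
    push Not at hproper
    refine ⟨I, subset_rfl, hI, hcard,
      (Finset.all_card_le_biUnion_card_iff_exists_injective fun a : I => r a).1 fun s => ?_⟩
    calc
      s.card = (s.image Subtype.val).card :=
          (Finset.card_image_of_injective s Subtype.val_injective).symm
      _ ≤ ((s.image Subtype.val).biUnion r).card :=
          card_le_card_biUnion_of_forall_ssubset hr hproper fun a ha => by
            obtain ⟨b, -, rfl⟩ := Finset.mem_image.1 ha
            exact b.2
      _ = (s.biUnion fun a => r a).card := by rw [Finset.image_biUnion]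

end Crown

section Degree

variable [Fintype V] {G : SimpleGraph V} [DecidableRel G.Adj] {v : V}

omit [Fintype V] [DecidableRel G.Adj] in
lemma Reducible.of_injective [DecidableEq V] {A R : Finset V} {f : A → V} (hA : A.Nonempty)
    (hf : f.Injective) (hfA : ∀ a b : A, f a ≠ b) (htri : ∀ a : A, G.IsNClique 3 {v, a.1, f a})
    (hR : ∀ a ∈ A, ∀ c, G.Adj v c → G.Adj a c → c ∈ R) (hRA : R.card ≤ A.card) :
    Reducible G := by
  have hpack := isTrianglePacking_image htri fun a b hab => by
    refine (Finset.card_le_card (t := {v}) fun x => ?_).trans (Finset.card_singleton v).le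
    simp only [Finset.mem_inter, Finset.mem_insert, Finset.mem_singleton]
    have := hf.ne hab
    have := hfA a b
    have := hfA b a
    have := Subtype.val_injective.ne hab
    grind
  rw [Fintype.card_coe] at hpack
  set M := Finset.univ.image fun a : A => s(a.1, f a)
  refine ⟨M ∪ R.image (s(v, ·)), _, by rwa [← Finset.card_pos, hpack.2, Finset.card_pos],
    ?_, hpack.1, ?_⟩
  · have hunion := Finset.card_union_le M (R.image (s(v, ·)))
    have hmatching : M.card ≤ _ := Finset.card_image_le
    have hspokes := Finset.card_image_le (s := R) (f := (s(v, ·)))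
    rw [Finset.card_univ, Fintype.card_coe] at hmatching
    omega
  have hmatch : ∀ a : A, s(a.1, f a) ∈ M ∪ R.image (s(v, ·)) := fun a =>
    Finset.mem_union_left _ (Finset.mem_image_of_mem _ (Finset.mem_univ a))
  have hspoke : ∀ a : A, ∀ c, G.Adj v c → G.Adj a c → s(v, c) ∈ M ∪ R.image (s(v, ·)) :=
    fun a c hvc hac => Finset.mem_union_right _ (Finset.mem_image_of_mem _ (hR a a.2 c hvc hac))
  generalize M ∪ R.image (s(v, ·)) = Z at hmatch hspoke ⊢
  simp only [Finset.forall_mem_image, Finset.mem_univ, forall_const, Finset.mem_insert,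
    Finset.mem_singleton]
  intro a x hx y hy hxy c hxc hyc
  obtain ⟨-, hvf, haf⟩ := is3Clique_triple_iff.1 (htri a)
  have hmate := hmatch a
  have hcommon := hspoke a c
  have hmateSpoke := hspoke a (f a) hvf haf
  rcases hx with hx | hx | hx <;> rcases hy with hy | hy | hy <;>
    rw [hx, hy] at hxy ⊢ <;> rw [hx] at hxc <;> rw [hy] at hyc <;> simp_all [Sym2.eq_swap]

/-- The crown reduction. By Hall's theorem, a minimal `A ⊆ I` with at most `|A|` neighbours inside
`N(v)` can be matched into them. -/
lemma Reducible.of_isIndepSet (hG : EdgesInTriangles G) {I : Finset V}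
    (hI : I ⊆ G.neighborFinset v) (hne : I.Nonempty) (hindep : G.IsIndepSet I)
    (hcard : G.degree v ≤ 2 * I.card) : Reducible G := by
  classical
  set r : V → Finset V := fun a => G.neighborFinset a ∩ G.neighborFinset v with hr
  have hadj : ∀ a ∈ I, G.Adj v a := fun a ha => (mem_neighborFinset ..).1 (hI ha)
  have hrI : I.biUnion r ⊆ G.neighborFinset v \ I := by
    intro b hb
    obtain ⟨a, ha, hb⟩ := Finset.mem_biUnion.1 hb
    simp only [hr, Finset.mem_inter, mem_neighborFinset] at hb
    exact Finset.mem_sdiff.2 ⟨(mem_neighborFinset ..).2 hb.2,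
      fun hbI => hindep ha hbI hb.1.ne hb.1⟩
  have hrne : ∀ a ∈ I, (r a).Nonempty := fun a ha => by
    obtain ⟨c, hvc, hac⟩ := hG (hadj a ha)
    exact ⟨c, by simp [hr, hvc, hac]⟩
  have hrcard : (I.biUnion r).card ≤ I.card := by
    have := Finset.card_le_card hrI
    rw [Finset.card_sdiff_of_subset hI, card_neighborFinset_eq_degree] at this
    omega
  obtain ⟨A, hAI, hA, hAcard, f, hf, hfr⟩ := exists_injective_of_card_biUnion_le hne hrne hrcard
  simp only [hr, Finset.mem_inter, mem_neighborFinset] at hfr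
  refine Reducible.of_injective (v := v) hA hf (fun a b hab => ?_)
    (fun a => is3Clique_triple_iff.2 ⟨hadj a (hAI a.2), (hfr a).2, (hfr a).1⟩)
    (fun a ha c hvc hac => Finset.mem_biUnion.2 ⟨a, ha, by simp [hr, hvc, hac]⟩) hAcard
  exact hindep (hAI a.2) (hAI b.2) (fun h => (hfr a).1.ne (by rw [hab, h])) (hab ▸ (hfr a).1)

end Degree

section DegreeSix
variable [Fintype V] {G : SimpleGraph V} [DecidableRel G.Adj]
  {v a b c d e f x y z p q r : V}

lemma exists_adj_notMem {l : List V} (h : l.length < G.degree v) : ∃ x, G.Adj v x ∧ x ∉ l := by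
  classical
  obtain ⟨x, hx, hxl⟩ := Finset.exists_mem_notMem_of_card_lt_card
    ((List.toFinset_card_le l).trans_lt h)
  exact ⟨x, (mem_neighborFinset ..).1 hx, by simpa using hxl⟩

lemma Reducible.of_triangle (hva : G.Adj v a) (hvb : G.Adj v b) (hab : G.Adj a b)
    (hdeg : G.degree v ≤ 3) : Reducible G := by
  have hnodup : [v, a, b].Nodup := by simp [hva.ne, hvb.ne, hab.ne]
  refine Reducible.of_isScheme ![v, a, b] {0} {s(1, 2)} ∅ ![{0, 1, 2}] (by decide)
    (List.nodup_ofFn.1 hnodup) ?_ ?_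
  · simp [is3Clique_triple_iff, *]
  · simp [Fin.sum_univ_succ, -Finset.sum_boole, *]
    grind [ncard_neighborSet]

lemma Reducible.of_two_edges (hnodup : [v, a, b, c, d].Nodup) (hva : G.Adj v a)
    (hvb : G.Adj v b) (hvc : G.Adj v c) (hvd : G.Adj v d) (hab : G.Adj a b) (hcd : G.Adj c d)
    (hdeg : G.degree v ≤ 4) : Reducible G := by
  refine Reducible.of_isScheme ![v, a, b, c, d] {0} {s(1, 2), s(3, 4), s(0, 1), s(0, 2)} ∅
    ![{0, 1, 2}, {0, 3, 4}] (by decide) (List.nodup_ofFn.1 hnodup) ?_ ?_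
  · simp [Fin.forall_fin_succ, is3Clique_triple_iff, *]
  · simp [Fin.sum_univ_succ, -Finset.sum_boole, *]
    grind [ncard_neighborSet]

lemma Reducible.of_degree_le_four (hG : EdgesInTriangles G) (hpos : 0 < G.degree v)
    (hdeg : G.degree v ≤ 4) : Reducible G := by
  classical
  obtain ⟨a, hva⟩ := (G.degree_pos_iff_exists_adj v).1 hpos
  obtain ⟨b, hvb, hab⟩ := hG hva
  by_cases hthree : G.degree v ≤ 3
  · exact Reducible.of_triangle hva hvb hab hthree
  obtain ⟨c, hvc, hc⟩ := exists_adj_notMem (G := G) (v := v) (l := [a, b]) (by grind)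
  obtain ⟨d, hvd, hd⟩ := exists_adj_notMem (G := G) (v := v) (l := [a, b, c]) (by grind)
  by_cases hcd : G.Adj c d
  · have hnodup : [v, a, b, c, d].Nodup := by
      grind [hva.ne, hvb.ne, hvc.ne, hvd.ne, hab.ne]
    exact Reducible.of_two_edges hnodup hva hvb hvc hvd hab hcd hdeg
  · refine Reducible.of_isIndepSet (v := v) (I := {c, d}) hG ?_ (by simp) ?_ ?_
    · simp [Finset.insert_subset_iff, *]
    · simp [IsIndepSet, Set.pairwise_pair, G.adj_comm d c, *]
    · rw [Finset.card_pair (by grind)]; grind [ncard_neighborSet]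

lemma Reducible.of_not_adj_triple (hG : EdgesInTriangles G) (hva : G.Adj v a) (hvb : G.Adj v b)
    (hvc : G.Adj v c) (hnodup : [a, b, c].Nodup) (hab : ¬G.Adj a b) (hac : ¬G.Adj a c)
    (hbc : ¬G.Adj b c) (hdeg : G.degree v ≤ 6) : Reducible G := by
  classical
  simp only [List.nodup_cons, List.mem_cons, List.not_mem_nil, not_or] at hnodup
  refine Reducible.of_isIndepSet (v := v) (I := {a, b, c}) hG ?_ (by simp) ?_ ?_
  · simp [Finset.insert_subset_iff, *]
  · simp [IsIndepSet, Set.pairwise_insert, Set.pairwise_singleton, G.adj_comm b a, G.adj_comm c a,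
      G.adj_comm c b, *]
  · rw [Finset.card_eq_three.2 ⟨a, b, c, by grind⟩]; grind [ncard_neighborSet]

lemma Reducible.of_not_adj_of_degree_le_five (hG : EdgesInTriangles G) (hx : G.Adj v x)
    (hy : G.Adj v y) (hz : G.Adj v z) (hnodup : [x, y, z].Nodup) (hzx : ¬G.Adj z x)
    (hzy : ¬G.Adj z y) (hdeg : G.degree v ≤ 5) : Reducible G := by
  by_cases hxy : G.Adj x y
  · obtain ⟨p, hp, hzp⟩ := hG hz
    have hnodup : [v, x, y, z, p].Nodup := by
      grind [hx.ne, hy.ne, hz.ne, hp.ne, hzp.ne]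
    refine Reducible.of_isScheme ![v, x, y, z, p] {0} {s(1, 2), s(3, 4), s(0, 4)} {s(3, 1), s(3, 2)}
      ![{0, 1, 2}, {0, 3, 4}] (by decide) (List.nodup_ofFn.1 hnodup) ?_ ?_
    · simp [Fin.forall_fin_succ, is3Clique_triple_iff, *]
    · simp [Fin.sum_univ_succ, -Finset.sum_boole, Finset.filter_insert, Finset.filter_singleton,
        *]
      grind [ncard_neighborSet]
  · exact Reducible.of_not_adj_triple hG hz hx hy (by grind) hzx hzy hxy (hdeg.trans (by simp))

lemma Reducible.of_perfect_matching (hnodup : [v, x, y, z, p, q, r].Nodup)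
    (hN : ∀ a ∈ [x, y, z, p, q, r], G.Adj v a) (hdeg : G.degree v ≤ 6) (hxy : G.Adj x y)
    (hzp : G.Adj z p) (hqr : G.Adj q r) (hzx : ¬G.Adj z x) (hzy : ¬G.Adj z y) : Reducible G := by
  refine Reducible.of_isScheme ![v, x, y, z, p, q, r] {0}
    {s(1, 2), s(3, 4), s(5, 6), s(0, 4), s(0, 5), s(0, 6)} {s(3, 1), s(3, 2)}
    ![{0, 1, 2}, {0, 3, 4}, {0, 5, 6}] (by decide) (List.nodup_ofFn.1 hnodup) ?_ ?_ <;>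
    simp only [List.forall_mem_cons] at hN
  · simp [Fin.forall_fin_succ, is3Clique_triple_iff, *]
  · simp [Fin.sum_univ_succ, -Finset.sum_boole, Finset.filter_insert, Finset.filter_singleton, *]
    grind [ncard_neighborSet]

lemma Reducible.of_triangle_component (hnodup : [v, x, y, r, z, p, q].Nodup)
    (hN : ∀ a ∈ [x, y, r, z, p, q], G.Adj v a) (hdeg : G.degree v ≤ 6) (hxy : G.Adj x y)
    (hx : ∀ a ∈ [z, p, q], ¬G.Adj x a) (hy : ∀ a ∈ [z, p, q], ¬G.Adj y a) : Reducible G := by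
  refine Reducible.of_isScheme ![v, x, y, r, z, p, q] {0} {s(1, 2), s(0, 3)}
    {s(1, 4), s(1, 5), s(1, 6), s(2, 4), s(2, 5), s(2, 6)}
    ![{0, 1, 2}] (by decide)
    (List.nodup_ofFn.1 hnodup) ?_ ?_ <;>
    simp only [List.forall_mem_cons] at hN hx hy
  · simp [is3Clique_triple_iff, *]
  · simp [Fin.sum_univ_succ, -Finset.sum_boole, Finset.filter_insert, Finset.filter_singleton, *]
    grind [ncard_neighborSet]

lemma Reducible.of_two_neighbors (hG : EdgesInTriangles G) (hnodup : [v, x, y, z, p, q, r].Nodup)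
    (hN : ∀ a ∈ [x, y, z, p, q, r], G.Adj v a) (hdeg : G.degree v ≤ 6) (hxy : G.Adj x y)
    (hzp : G.Adj z p) (hzq : G.Adj z q) (hqr : ¬G.Adj q r) (hzx : ¬G.Adj z x)
    (hzy : ¬G.Adj z y) : Reducible G := by
  by_contra hred
  obtain ⟨hx, hy, hz, hp, hq, hr, -⟩ : G.Adj v x ∧ G.Adj v y ∧ G.Adj v z ∧ G.Adj v p ∧
    G.Adj v q ∧ G.Adj v r ∧ True := by simpa using hN
  have hpr : ¬G.Adj p r := fun hpr =>
    hred (.of_perfect_matching (q := p) (by grind) (by grind) hdeg hxy hzq hpr hzx hzy)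
  have hpq : G.Adj p q := by_contra fun hpq =>
    hred (.of_not_adj_triple hG hp hq hr (by grind) hpq hpr hqr hdeg)
  have hzr : ¬G.Adj z r := fun hzr =>
    hred (.of_perfect_matching (by grind) (by grind) hdeg hxy hzr hpq hzx hzy)
  have hrx : G.Adj r x := by_contra fun hrx =>
    hred (.of_not_adj_triple hG hz hr hx (by grind) hzr hzx hrx hdeg)
  have hry : G.Adj r y := by_contra fun hry =>
    hred (.of_not_adj_triple hG hz hr hy (by grind) hzr hzy hry hdeg)
  have hxp : ¬G.Adj x p := fun h =>
    hred (.of_perfect_matching (by grind) (by grind) hdeg hry hzq h hzr hzy)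
  have hyp : ¬G.Adj y p := fun h =>
    hred (.of_perfect_matching (by grind) (by grind) hdeg hrx hzq h hzr hzx)
  have hxq : ¬G.Adj x q := fun h =>
    hred (.of_perfect_matching (by grind) (by grind) hdeg hry hzp h hzr hzy)
  have hyq : ¬G.Adj y q := fun h =>
    hred (.of_perfect_matching (by grind) (by grind) hdeg hrx hzp h hzr hzx)
  refine hred (.of_triangle_component (v := v) (r := r) (z := z) (p := p) (q := q) (by grind)
    (by grind) hdeg hxy ?_ ?_) <;>
    simp [G.adj_comm _ z, *]

lemma Reducible.of_not_adj_of_degree_eq_six (hG : EdgesInTriangles G) (hx : G.Adj v x)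
    (hy : G.Adj v y) (hz : G.Adj v z) (hnodup : [x, y, z].Nodup) (hzx : ¬G.Adj z x)
    (hzy : ¬G.Adj z y) (hdeg : G.degree v = 6) : Reducible G := by
  by_contra hred
  have hxy : G.Adj x y := by_contra fun hxy =>
    hred (.of_not_adj_triple hG hz hx hy (by grind) hzx hzy hxy hdeg.le)
  obtain ⟨p, hp, hzp⟩ := hG hz
  obtain ⟨q, hq, hq'⟩ := exists_adj_notMem (G := G) (v := v) (l := [x, y, z, p]) (by simp [hdeg])
  obtain ⟨r, hr, hr'⟩ :=
    exists_adj_notMem (G := G) (v := v) (l := [x, y, z, p, q]) (by simp [hdeg])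
  have hnodup : [v, x, y, z, p, q, r].Nodup := by
    grind [hx.ne, hy.ne, hz.ne, hp.ne, hq.ne, hr.ne, hzp.ne]
  have hqr : ¬G.Adj q r := fun hqr =>
    hred (.of_perfect_matching hnodup (by simp [*]) hdeg.le hxy hzp hqr hzx hzy)
  by_cases hzq : G.Adj z q
  · exact hred (.of_two_neighbors hG hnodup (by simp [*]) hdeg.le hxy hzp hzq hqr hzx hzy)
  · have hzr : G.Adj z r := by_contra fun hzr =>
      hred (.of_not_adj_triple hG hz hq hr (by grind) hzq hzr hqr hdeg.le)
    exact hred (.of_two_neighbors (r := q) hG (by grind) (by simp [*]) hdeg.le hxy hzp hzr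
      (by rwa [G.adj_comm]) hzx hzy)

end DegreeSix

/-- Every vertex of `s` has at most one non-neighbour in `s`, i.e. `G` restricted to `s` is a clique
minus a matching. -/
def IsCliqueMinusMatching (G : SimpleGraph V) (s : Set V) : Prop :=
  ∀ ⦃x y z⦄, x ∈ s → y ∈ s → z ∈ s → x ≠ y → z ≠ x → z ≠ y → G.Adj z x ∨ G.Adj z y

/-- The shape of the neighbourhood of a vertex of degree at most six in an irreducible graph: a
clique minus a matching which consists of at most one edge if the degree is five, and which is
perfect if the degree is six and it has at least two edges. -/
structure IsTight (G : SimpleGraph V) [Fintype V] [DecidableRel G.Adj] (v : V) : Prop where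
  five_le_degree : 5 ≤ G.degree v
  degree_le_six : G.degree v ≤ 6
  isCliqueMinusMatching : IsCliqueMinusMatching G (G.neighborSet v)
  degree_eq_six : ∀ ⦃a b c d⦄, [a, b, c, d].Nodup → (∀ t ∈ [a, b, c, d], G.Adj v t) →
    ¬G.Adj a b → ¬G.Adj c d → G.degree v = 6
  not_adj : ∀ ⦃a b c d e f⦄, [a, b, c, d, e, f].Nodup → (∀ t ∈ [a, b, c, d, e, f], G.Adj v t) →
    ¬G.Adj a b → ¬G.Adj c d → ¬G.Adj e f

section Tight
variable [Fintype V] {G : SimpleGraph V} [DecidableRel G.Adj]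
  {v a b c d e f : V}

lemma Reducible.of_fourCycle_of_degree_le_five (hnodup : [v, a, b, c, d, e].Nodup)
    (hN : ∀ t ∈ [a, b, c, d, e], G.Adj v t) (hdeg : G.degree v ≤ 5) (hac : G.Adj a c)
    (had : G.Adj a d) (hbc : G.Adj b c) (hbd : G.Adj b d) (he : ∀ t ∈ [a, b, c, d], G.Adj e t)
    (hab : ¬G.Adj a b) (hcd : ¬G.Adj c d) : Reducible G := by
  refine Reducible.of_isScheme ![v, a, b, c, d, e] {0}
    {s(1, 3), s(1, 4), s(2, 3), s(2, 4), s(5, 1), s(5, 2), s(5, 3), s(5, 4)} {s(1, 2), s(3, 4)}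
    ![{0, 1, 3}, {0, 2, 4}, {5, 1, 4}, {5, 2, 3}] (by decide) (List.nodup_ofFn.1 hnodup) ?_ ?_ <;>
    simp only [List.forall_mem_cons] at hN he
  · simp [Fin.forall_fin_succ, is3Clique_triple_iff, *]
  · simp [Fin.sum_univ_succ, -Finset.sum_boole, Finset.filter_insert, Finset.filter_singleton, *]
    grind [ncard_neighborSet]

lemma Reducible.of_fourCycle_of_degree_le_six (hnodup : [v, a, b, c, d, e, f].Nodup)
    (hN : ∀ t ∈ [a, b, c, d, e, f], G.Adj v t) (hdeg : G.degree v ≤ 6) (hac : G.Adj a c)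
    (had : G.Adj a d) (hbc : G.Adj b c) (hbd : G.Adj b d) (he : ∀ t ∈ [a, b, c, d], G.Adj e t)
    (hef : G.Adj e f) (hab : ¬G.Adj a b) (hcd : ¬G.Adj c d) : Reducible G := by
  refine Reducible.of_isScheme ![v, a, b, c, d, e, f] {0}
    {s(1, 3), s(1, 4), s(2, 3), s(2, 4), s(5, 1), s(5, 2), s(5, 3), s(5, 4), s(5, 6), s(0, 6)}
    {s(1, 2), s(3, 4)} ![{0, 1, 3}, {0, 2, 4}, {5, 1, 4}, {5, 2, 3}, {0, 5, 6}]
    (by decide) (List.nodup_ofFn.1 hnodup) ?_ ?_ <;>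
    simp only [List.forall_mem_cons] at hN he
  · simp [Fin.forall_fin_succ, is3Clique_triple_iff, *]
  · simp [Fin.sum_univ_succ, -Finset.sum_boole, Finset.filter_insert, Finset.filter_singleton, *]
    grind [ncard_neighborSet]

lemma isCliqueMinusMatching_of_not_reducible (hG : EdgesInTriangles G) (hred : ¬Reducible G)
    (hdeg : G.degree v ≤ 6) : IsCliqueMinusMatching G (G.neighborSet v) := by
  intro x y z hx hy hz hxy hzx hzy
  by_contra! ⟨hxz, hyz⟩
  have hnodup : [x, y, z].Nodup := by grind
  rcases hdeg.eq_or_lt with hsix | hfive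
  · exact hred (.of_not_adj_of_degree_eq_six hG hx hy hz hnodup hxz hyz hsix)
  · exact hred (.of_not_adj_of_degree_le_five hG hx hy hz hnodup hxz hyz (by omega))

omit [Fintype V] [DecidableRel G.Adj] in
lemma IsCliqueMinusMatching.adj_of_not_adj {s : Set V} (h : IsCliqueMinusMatching G s)
    (hab : ¬G.Adj a b) (ha : a ∈ s) (hb : b ∈ s) (hc : c ∈ s) (hnodup : [a, b, c].Nodup) :
    G.Adj c a ∧ G.Adj c b := by
  have hba : ¬G.Adj b a := by rwa [G.adj_comm]
  constructor
  · exact ((h hb hc ha (by grind) (by grind) (by grind)).resolve_left hab).symm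
  · exact ((h ha hc hb (by grind) (by grind) (by grind)).resolve_left hba).symm

omit [Fintype V] [DecidableRel G.Adj] in
lemma IsCliqueMinusMatching.fourCycle (h : IsCliqueMinusMatching G (G.neighborSet v))
    (hnodup : [a, b, c, d].Nodup) (hN : ∀ t ∈ [a, b, c, d], G.Adj v t) (hab : ¬G.Adj a b) :
    G.Adj a c ∧ G.Adj a d ∧ G.Adj b c ∧ G.Adj b d := by
  simp only [List.forall_mem_cons] at hN
  obtain ⟨hca, hcb⟩ := h.adj_of_not_adj hab hN.1 hN.2.1 hN.2.2.1 (by grind)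
  obtain ⟨hda, hdb⟩ := h.adj_of_not_adj hab hN.1 hN.2.1 hN.2.2.2.1 (by grind)
  exact ⟨hca.symm, hda.symm, hcb.symm, hdb.symm⟩

omit [Fintype V] [DecidableRel G.Adj] in
lemma IsCliqueMinusMatching.adj_fourCycle (h : IsCliqueMinusMatching G (G.neighborSet v))
    (hnodup : [a, b, c, d, e].Nodup) (hN : ∀ t ∈ [a, b, c, d, e], G.Adj v t) (hab : ¬G.Adj a b)
    (hcd : ¬G.Adj c d) : ∀ t ∈ [a, b, c, d], G.Adj e t := by
  simp only [List.forall_mem_cons] at hN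
  obtain ⟨hea, heb⟩ := h.adj_of_not_adj hab hN.1 hN.2.1 hN.2.2.2.2.1 (by grind)
  obtain ⟨hec, hed⟩ := h.adj_of_not_adj hcd hN.2.2.1 hN.2.2.2.1 hN.2.2.2.2.1 (by grind)
  simp [*]

lemma IsTight.of_not_reducible (hG : EdgesInTriangles G) (hred : ¬Reducible G)
    (hpos : 0 < G.degree v) (hdeg : G.degree v ≤ 6) : IsTight G v := by
  have hfive : 5 ≤ G.degree v := by
    by_contra hlt
    exact hred (.of_degree_le_four hG hpos (by omega))
  have hmatching := isCliqueMinusMatching_of_not_reducible hG hred hdeg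
  refine ⟨hfive, hdeg, hmatching, fun a b c d hnodup hN hab hcd => ?_,
    fun a b c d e f hnodup hN hab hcd hef => ?_⟩
  · by_contra hne
    obtain ⟨e, he, hnew⟩ := exists_adj_notMem (G := G) (v := v) (l := [a, b, c, d]) hfive
    obtain ⟨hac, had, hbc, hbd⟩ := hmatching.fourCycle hnodup hN hab
    have hN' : ∀ t ∈ [a, b, c, d, e], G.Adj v t := by grind
    exact hred (.of_fourCycle_of_degree_le_five (by grind [G.irrefl]) hN' (by omega) hac had hbc
      hbd (hmatching.adj_fourCycle (by grind) hN' hab hcd) hab hcd)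
  · obtain ⟨hac, had, hbc, hbd⟩ := hmatching.fourCycle (c := c) (d := d) (by grind) (by grind) hab
    exact hred (.of_fourCycle_of_degree_le_six (by grind [G.irrefl]) hN hdeg hac had hbc hbd
      (hmatching.adj_fourCycle (e := e) (by grind) (by grind) hab hcd) hef hab hcd)

end Tight

/-- `v, w`, `a, b` and `c, d` are the opposite pairs of a (not necessarily induced) octahedron. -/
structure IsOctahedron (G : SimpleGraph V) (v w a b c d : V) : Prop where
  nodup : [v, w, a, b, c, d].Nodup
  left_adj : ∀ t ∈ [a, b, c, d], G.Adj v t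
  right_adj : ∀ t ∈ [a, b, c, d], G.Adj w t
  adj_a_c : G.Adj a c
  adj_a_d : G.Adj a d
  adj_b_c : G.Adj b c
  adj_b_d : G.Adj b d

section Octahedron
variable {G : SimpleGraph V} {v w a b c d p q u z : V}

lemma IsOctahedron.symm (h : IsOctahedron G v w a b c d) : IsOctahedron G w v a b c d :=
  ⟨(List.Perm.swap _ _ _).nodup h.nodup, h.right_adj, h.left_adj, h.adj_a_c, h.adj_a_d, h.adj_b_c,
    h.adj_b_d⟩

variable [Fintype V] [DecidableRel G.Adj]

lemma Reducible.of_isOctahedron (h : IsOctahedron G v w a b c d)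
    (hdeg : G.adjMatrix ℕ a b + G.adjMatrix ℕ c d + G.degree v + G.degree w ≤
      12 + G.adjMatrix ℕ v w) : Reducible G := by
  obtain ⟨hnodup, hv, hw, hac, had, hbc, hbd⟩ := h
  refine Reducible.of_isScheme ![v, w, a, b, c, d] {0, 1} {s(2, 4), s(2, 5), s(3, 4), s(3, 5)}
    {s(2, 3), s(4, 5), s(0, 1)} ![{0, 2, 4}, {0, 3, 5}, {1, 2, 5}, {1, 3, 4}] (by decide)
    (List.nodup_ofFn.1 hnodup) ?_ ?_ <;>
    simp only [List.forall_mem_cons] at hv hw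
  · simp [Fin.forall_fin_succ, is3Clique_triple_iff, *]
  · simp [Fin.sum_univ_succ, -Finset.sum_boole, Finset.card_filter,
      G.adj_comm w v, *] at hdeg ⊢
    grind [ncard_neighborSet]

lemma Reducible.of_isOctahedron_of_adj (h : IsOctahedron G v w a b c d)
    (hnodup : [v, w, a, b, c, d, p, q].Nodup) (hvp : G.Adj v p) (hvq : G.Adj v q)
    (hpq : G.Adj p q) (hdeg : G.adjMatrix ℕ a b + G.adjMatrix ℕ c d + G.degree v + G.degree w ≤
      13 + G.adjMatrix ℕ v w) : Reducible G := by
  obtain ⟨-, hv, hw, hac, had, hbc, hbd⟩ := h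
  refine Reducible.of_isScheme ![v, w, a, b, c, d, p, q] {0, 1}
    {s(2, 4), s(2, 5), s(3, 4), s(3, 5), s(0, 6), s(0, 7), s(6, 7)}
    {s(2, 3), s(4, 5), s(0, 1), s(1, 6), s(1, 7)}
    ![{0, 2, 4}, {0, 3, 5}, {1, 2, 5}, {1, 3, 4}, {0, 6, 7}] (by decide)
    (List.nodup_ofFn.1 hnodup) ?_ ?_ <;>
    simp only [List.forall_mem_cons] at hv hw
  · simp [Fin.forall_fin_succ, is3Clique_triple_iff, *]
  · simp [Fin.sum_univ_succ, -Finset.sum_boole, Finset.card_filter,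
      G.adj_comm w v, *] at hdeg ⊢
    grind [ncard_neighborSet]

lemma Reducible.of_isOctahedron_of_common_neighbor (h : IsOctahedron G v w a b c d)
    (hnodup : [v, w, a, b, c, d, z].Nodup) (hvw : G.Adj v w) (hvz : G.Adj v z) (hwz : G.Adj w z)
    (hdeg : G.adjMatrix ℕ a b + G.adjMatrix ℕ c d + G.degree v + G.degree w ≤ 15) :
    Reducible G := by
  obtain ⟨-, hv, hw, hac, had, hbc, hbd⟩ := h
  refine Reducible.of_isScheme ![v, w, a, b, c, d, z] {0, 1}
    {s(2, 4), s(2, 5), s(3, 4), s(3, 5), s(0, 1), s(0, 6), s(1, 6)} {s(2, 3), s(4, 5)}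
    ![{0, 2, 4}, {0, 3, 5}, {1, 2, 5}, {1, 3, 4}, {0, 1, 6}] (by decide)
    (List.nodup_ofFn.1 hnodup) ?_ ?_ <;>
    simp only [List.forall_mem_cons] at hv hw
  · simp [Fin.forall_fin_succ, is3Clique_triple_iff, *]
  · simp [Fin.sum_univ_succ, -Finset.sum_boole, Finset.card_filter, G.adj_comm w v,
      *] at hdeg ⊢
    grind [ncard_neighborSet]

lemma Reducible.of_isOctahedron_of_apex (h : IsOctahedron G v w a b c d)
    (hnodup : [v, w, a, b, c, d, z].Nodup) (hab : G.Adj a b) (hcd : G.Adj c d)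
    (hz : ∀ t ∈ [a, b, c, d], G.Adj z t)
    (hdeg : G.degree v + G.degree w ≤
      10 + G.adjMatrix ℕ v w + G.adjMatrix ℕ v z + G.adjMatrix ℕ w z) : Reducible G := by
  obtain ⟨-, hv, hw, hac, had, hbc, hbd⟩ := h
  refine Reducible.of_isScheme ![v, w, a, b, c, d, z] {0, 1}
    {s(2, 4), s(2, 5), s(3, 4), s(3, 5), s(2, 3), s(4, 5), s(6, 2), s(6, 3), s(6, 4), s(6, 5)}
    {s(0, 1)} ![{0, 2, 4}, {0, 3, 5}, {1, 2, 5}, {1, 3, 4}, {6, 2, 3}, {6, 4, 5}] (by decide)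
    (List.nodup_ofFn.1 hnodup) ?_ ?_ <;>
    simp only [List.forall_mem_cons] at hv hw hz
  · simp [Fin.forall_fin_succ, is3Clique_triple_iff, *]
  · simp [Fin.sum_univ_succ, -Finset.sum_boole, Finset.card_filter, G.adj_comm w v,
      *] at hdeg ⊢
    grind [ncard_neighborSet]

lemma Reducible.of_clique_of_degree_add_le_ten (hnodup : [v, u, a, b, c, d].Nodup)
    (hv : ∀ t ∈ [u, a, b, c, d], G.Adj v t) (hu : ∀ t ∈ [b, c, d], G.Adj u t)
    (hab : G.Adj a b) (hac : G.Adj a c) (had : G.Adj a d) (hbc : G.Adj b c) (hbd : G.Adj b d)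
    (hdeg : G.degree v + G.degree u ≤ 10) : Reducible G := by
  refine Reducible.of_isScheme ![v, u, a, b, c, d] {0, 1}
    {s(2, 3), s(2, 4), s(2, 5), s(3, 4), s(3, 5), s(4, 5), s(0, 1)} ∅
    ![{0, 1, 4}, {1, 3, 5}, {0, 2, 5}, {2, 3, 4}] (by decide)
    (List.nodup_ofFn.1 hnodup) ?_ ?_ <;>
    simp only [List.forall_mem_cons] at hv hu
  · simp [Fin.forall_fin_succ, is3Clique_triple_iff, *]
  · simp [Fin.sum_univ_succ, -Finset.sum_boole, G.adj_comm u v, *] at hdeg ⊢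
    grind [ncard_neighborSet]

lemma Reducible.of_clique_of_triangle (hnodup : [v, u, a, b, c, d, p].Nodup)
    (hv : ∀ t ∈ [u, a, b, c, d], G.Adj v t) (hu : ∀ t ∈ [a, b, c, d, p], G.Adj u t)
    (hab : G.Adj a b) (hac : G.Adj a c) (had : G.Adj a d) (hbc : G.Adj b c) (hbd : G.Adj b d)
    (hap : G.Adj a p) (hdeg : G.degree v + G.degree u ≤ 12) : Reducible G := by
  refine Reducible.of_isScheme ![v, u, a, b, c, d, p] {0, 1}
    {s(2, 3), s(2, 4), s(2, 5), s(3, 4), s(3, 5), s(4, 5), s(0, 1), s(1, 6), s(2, 6)} {s(0, 6)}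
    ![{0, 1, 4}, {1, 3, 5}, {0, 2, 5}, {2, 3, 4}, {1, 2, 6}] (by decide)
    (List.nodup_ofFn.1 hnodup) ?_ ?_ <;>
    simp only [List.forall_mem_cons] at hv hu
  · simp [Fin.forall_fin_succ, is3Clique_triple_iff, *]
  · simp [Fin.sum_univ_succ, -Finset.sum_boole, Finset.card_filter, G.adj_comm u v, *] at hdeg ⊢
    grind [ncard_neighborSet]

end Octahedron

/-! ### Two tight vertices -/

lemma exists_append_of_le_card {α : Type*} {s : Finset α} {l : List α}
    (hl : l.Nodup) (hls : ∀ x ∈ l, x ∈ s) {n : ℕ} (hn : l.length + n ≤ s.card) :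
    ∃ l' : List α, l'.length = n ∧ (l ++ l').Nodup ∧ ∀ x ∈ l ++ l', x ∈ s := by
  classical
  obtain ⟨t, ht, hcard⟩ := Finset.exists_subset_card_eq (s := s \ l.toFinset) (n := n) (by
    rw [Finset.card_sdiff_of_subset fun x hx => hls x (List.mem_toFinset.1 hx),
      List.toFinset_card_of_nodup hl]
    omega)
  have ht' : ∀ x ∈ t.toList, x ∈ s ∧ x ∉ l := fun x hx => by simpa using ht (t.mem_toList.1 hx)
  refine ⟨t.toList, by simpa using hcard, List.nodup_append.2 ⟨hl, t.nodup_toList, ?_⟩, ?_⟩ <;>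
    grind

lemma mem_of_card_le_length {α : Type*} {s : Finset α} {l : List α} (hl : l.Nodup)
    (hls : ∀ x ∈ l, x ∈ s) (hcard : s.card ≤ l.length) {x : α} (hx : x ∈ s) : x ∈ l := by
  classical
  have heq : l.toFinset = s := Finset.eq_of_subset_of_card_le
    (fun y hy => hls y (List.mem_toFinset.1 hy)) (by rwa [List.toFinset_card_of_nodup hl])
  rwa [← heq, List.mem_toFinset] at hx

section NotAdj
variable {G : SimpleGraph V} {v w a b c d p q u : V}

lemma IsOctahedron.of_not_adj (h : IsCliqueMinusMatching G (G.neighborSet v)) (hvw : v ≠ w)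
    (hnodup : [a, b, c, d].Nodup) (hv : ∀ t ∈ [a, b, c, d], G.Adj v t)
    (hw : ∀ t ∈ [a, b, c, d], G.Adj w t) (hab : ¬G.Adj a b) : IsOctahedron G v w a b c d := by
  obtain ⟨hac, had, hbc, hbd⟩ := h.fourCycle hnodup hv hab
  have hne : ∀ t ∈ [a, b, c, d], t ≠ v ∧ t ≠ w := fun t ht => ⟨(hv t ht).ne', (hw t ht).ne'⟩
  exact ⟨by grind, hv, hw, hac, had, hbc, hbd⟩

lemma IsOctahedron.of_isClique {s : Set V} (hs : G.IsClique s) (hvw : v ≠ w)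
    (hnodup : [a, b, c, d].Nodup) (habcd : ∀ t ∈ [a, b, c, d], t ∈ s)
    (hv : ∀ t ∈ [a, b, c, d], G.Adj v t) (hw : ∀ t ∈ [a, b, c, d], G.Adj w t) :
    IsOctahedron G v w a b c d := by
  have hne : ∀ t ∈ [a, b, c, d], t ≠ v ∧ t ≠ w := fun t ht => ⟨(hv t ht).ne', (hw t ht).ne'⟩
  refine ⟨by grind, hv, hw, hs ?_ ?_ ?_, hs ?_ ?_ ?_, hs ?_ ?_ ?_, hs ?_ ?_ ?_⟩ <;> grind

variable [Fintype V] [DecidableRel G.Adj]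

omit [Fintype V] in
lemma adjMatrix_le_one (a b : V) : G.adjMatrix ℕ a b ≤ 1 := by
  rw [adjMatrix_apply]
  split_ifs <;> simp

lemma exists_isOctahedron [DecidableEq V] (h : IsCliqueMinusMatching G (G.neighborSet v))
    (hvw : v ≠ w) (hfour : 4 ≤ (G.neighborFinset v ∩ G.neighborFinset w).card) :
    ∃ a b c d, IsOctahedron G v w a b c d ∧
      (¬G.Adj a b ∨ G.IsClique (G.neighborFinset v ∩ G.neighborFinset w : Finset V)) := by
  by_cases hs : G.IsClique (G.neighborFinset v ∩ G.neighborFinset w : Finset V)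
  · obtain ⟨_, hlen, hnodup, hN⟩ := exists_append_of_le_card (n := 4) List.nodup_nil (by simp)
      (by simpa using hfour)
    obtain ⟨a, b, c, d, rfl⟩ := List.length_eq_four.1 hlen
    rw [List.nil_append] at hnodup hN
    exact ⟨a, b, c, d, .of_isClique hs hvw hnodup hN (by grind [mem_neighborFinset])
      (by grind [mem_neighborFinset]), Or.inr hs⟩
  · obtain ⟨⟨a, ha⟩, ⟨b, hb⟩, hne, hab⟩ := (G.not_isClique_iff).1 hs
    obtain ⟨_, hlen, hnodup, hN⟩ := exists_append_of_le_card (n := 2) (l := [a, b])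
      (by simpa using hne) (by simpa using And.intro ha hb) hfour
    obtain ⟨c, d, rfl⟩ := List.length_eq_two.1 hlen
    simp only [List.cons_append, List.nil_append, Finset.mem_inter, mem_neighborFinset] at hnodup hN
    exact ⟨a, b, c, d, .of_not_adj h hvw hnodup (fun t ht => (hN t ht).1)
      (fun t ht => (hN t ht).2) hab, Or.inl hab⟩

lemma IsOctahedron.mem_neighborFinset_inter [DecidableEq V] (h : IsOctahedron G v w a b c d) :
    ∀ t ∈ [a, b, c, d], t ∈ G.neighborFinset v ∩ G.neighborFinset w := fun t ht => by
  simpa using ⟨h.left_adj t ht, h.right_adj t ht⟩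

lemma Reducible.of_isOctahedron_of_not_adj (hv : IsTight G v) (hw : G.degree w ≤ 6)
    (hadj : ¬G.Adj v w) (hoct : IsOctahedron G v w a b c d) (hab : ¬G.Adj a b) :
    Reducible G := by
  classical
  have hNv := hoct.left_adj
  have hvw := hoct.nodup
  have hab0 : G.adjMatrix ℕ a b = 0 := by simp [hab]
  have hcd1 : G.adjMatrix ℕ c d ≤ 1 := adjMatrix_le_one c d
  have hv6 := hv.degree_le_six
  by_cases hdeg : G.degree v + G.degree w ≤ 11
  · exact .of_isOctahedron hoct (by omega)
  obtain ⟨_, hlen, hnodup', hpq⟩ := exists_append_of_le_card (s := G.neighborFinset v) (n := 2)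
    (l := [a, b, c, d]) (by grind) (by simpa using hNv) (by simpa using (by omega : 6 ≤ G.degree v))
  obtain ⟨p, q, rfl⟩ := List.length_eq_two.1 hlen
  simp only [List.cons_append, List.nil_append, mem_neighborFinset] at hnodup' hpq
  by_cases hadj' : G.Adj p q
  · have hne : ∀ t ∈ [a, b, c, d, p, q], t ≠ v ∧ t ≠ w := fun t ht =>
      ⟨(hpq t ht).ne', fun h => hadj (h ▸ hpq t ht)⟩
    exact .of_isOctahedron_of_adj hoct (p := p) (q := q) (by grind) (hpq p (by simp))
      (hpq q (by simp)) hadj' (by omega)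
  · have hcd0 : G.adjMatrix ℕ c d = 0 := by
      simp [hv.not_adj (a := a) (b := b) (c := p) (d := q) (e := c) (f := d) (by grind) (by grind)
        hab hadj']
    exact .of_isOctahedron hoct (by omega)

lemma Reducible.of_isOctahedron_of_degree_eq_six (hw : IsTight G w) (hw6 : G.degree w = 6)
    (hv5 : G.degree v ≤ 5) (hadj : ¬G.Adj v w) (hoct : IsOctahedron G v w a b c d)
    (hab : G.Adj a b) (hcd : G.Adj c d) : Reducible G := by
  classical
  have hNw := hoct.right_adj
  obtain ⟨_, hlen, hnodup', hpq⟩ := exists_append_of_le_card (s := G.neighborFinset w) (n := 2)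
    (l := [a, b, c, d]) (by grind [hoct.nodup]) (by simpa using hNw) (by simp [hw6])
  obtain ⟨p, q, rfl⟩ := List.length_eq_two.1 hlen
  simp only [List.cons_append, List.nil_append, mem_neighborFinset] at hnodup' hpq
  have hne : ∀ t ∈ [a, b, c, d, p, q], t ≠ v ∧ t ≠ w := fun t ht =>
    ⟨fun h => hadj (h ▸ (hpq t ht).symm), (hpq t ht).ne'⟩
  have hvw := hoct.nodup
  by_cases hadj' : G.Adj p q
  · have hab1 := adjMatrix_le_one (G := G) a b
    have hcd1 := adjMatrix_le_one (G := G) c d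
    exact .of_isOctahedron_of_adj hoct.symm (p := p) (q := q) (by grind) (hpq p (by simp))
      (hpq q (by simp)) hadj' (by omega)
  · have hwp : G.adjMatrix ℕ w p = 1 := by simp [hpq]
    refine .of_isOctahedron_of_apex hoct (z := p) (by grind) hab hcd (fun t ht => ?_) (by omega)
    exact (hw.isCliqueMinusMatching.adj_of_not_adj hadj' (hpq p (by simp)) (hpq q (by simp))
      (hNw t ht) (by grind)).1.symm

lemma Reducible.of_isOctahedron_of_isClique [DecidableEq V] (hv : IsTight G v) (hw : IsTight G w)
    (hadj : ¬G.Adj v w) (hoct : IsOctahedron G v w a b c d)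
    (hs : G.IsClique (G.neighborFinset v ∩ G.neighborFinset w : Finset V))
    (hcard : (G.neighborFinset v ∪ G.neighborFinset w).card ≤ 7) : Reducible G := by
  have hnodup := hoct.nodup
  have hmem := hoct.mem_neighborFinset_inter
  have hab : G.Adj a b := hs (hmem a (by simp)) (hmem b (by simp)) (by grind)
  have hcd : G.Adj c d := hs (hmem c (by simp)) (hmem d (by simp)) (by grind)
  have hab1 := adjMatrix_le_one (G := G) a b
  have hcd1 := adjMatrix_le_one (G := G) c d
  have hv6 := hv.degree_le_six
  have hw6 := hw.degree_le_six
  have hsum := Finset.card_union_add_card_inter (G.neighborFinset v) (G.neighborFinset w)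
  simp only [card_neighborFinset_eq_degree] at hsum
  by_cases hfive : 4 < (G.neighborFinset v ∩ G.neighborFinset w).card
  · obtain ⟨z, hz, hnew⟩ := Finset.exists_mem_notMem_of_card_lt_card
      ((List.toFinset_card_le [a, b, c, d]).trans_lt hfive)
    rw [List.mem_toFinset] at hnew
    obtain ⟨hvz, hwz⟩ : G.Adj v z ∧ G.Adj w z := by simpa using hz
    have hvz1 : G.adjMatrix ℕ v z = 1 := by simp [hvz]
    have hwz1 : G.adjMatrix ℕ w z = 1 := by simp [hwz]
    exact .of_isOctahedron_of_apex hoct (z := z) (by grind [hoct.nodup, hvz.ne, hwz.ne]) hab hcd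
      (fun t ht => hs hz (hmem t ht) (by grind)) (by omega)
  by_cases hten : G.degree v + G.degree w ≤ 10
  · exact .of_isOctahedron hoct (by omega)
  by_cases hw' : G.degree w = 6
  · exact .of_isOctahedron_of_degree_eq_six hw hw' (by omega) hadj hoct hab hcd
  · exact .of_isOctahedron_of_degree_eq_six hv (by omega) (by omega) (fun h => hadj h.symm)
      hoct.symm hab hcd

lemma IsTight.degree_eq_five_of_not_adj [DecidableEq V] (hred : ¬Reducible G) (hv : IsTight G v)
    (hw : IsTight G w) (hvw : v ≠ w) (hadj : ¬G.Adj v w)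
    (hcard : (G.neighborFinset v ∪ G.neighborFinset w).card ≤ 7) :
    G.degree v = 5 ∧ G.degree w = 5 ∧ (G.neighborFinset v ∩ G.neighborFinset w).card = 3 := by
  have hsum := Finset.card_union_add_card_inter (G.neighborFinset v) (G.neighborFinset w)
  simp only [card_neighborFinset_eq_degree] at hsum
  have hv5 := hv.five_le_degree
  have hw5 := hw.five_le_degree
  suffices (G.neighborFinset v ∩ G.neighborFinset w).card ≤ 3 by omega
  by_contra! hfour
  obtain ⟨a, b, c, d, hoct, hab | hs⟩ := exists_isOctahedron hv.isCliqueMinusMatching hvw hfour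
  · exact hred (.of_isOctahedron_of_not_adj hv hw.degree_le_six hadj hoct hab)
  · exact hred (.of_isOctahedron_of_isClique hv hw hadj hoct hs hcard)

end NotAdj

section Adj
variable [Fintype V] [DecidableEq V] {G : SimpleGraph V} [DecidableRel G.Adj]
  {v u a b c d p q : V}

lemma Reducible.of_isOctahedron_of_five_le (h : IsOctahedron G v u a b c d) (hvu : G.Adj v u)
    (hfive : 4 < (G.neighborFinset v ∩ G.neighborFinset u).card)
    (hdeg : G.degree v + G.degree u ≤ 13) : Reducible G := by
  obtain ⟨z, hz, hnew⟩ := Finset.exists_mem_notMem_of_card_lt_card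
    ((List.toFinset_card_le [a, b, c, d]).trans_lt hfive)
  rw [List.mem_toFinset] at hnew
  obtain ⟨hvz, huz⟩ : G.Adj v z ∧ G.Adj u z := by simpa using hz
  have hab1 := adjMatrix_le_one (G := G) a b
  have hcd1 := adjMatrix_le_one (G := G) c d
  exact .of_isOctahedron_of_common_neighbor h (z := z)
    (by grind [h.nodup, hvz.ne, huz.ne]) hvu hvz huz (by omega)

lemma Reducible.of_isClique_of_degree_eq_six (hv : IsTight G v) (hv6 : G.degree v = 6)
    (hvu : G.Adj v u) (hoct : IsOctahedron G v u a b c d)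
    (hs : G.IsClique (G.neighborFinset v ∩ G.neighborFinset u : Finset V))
    (hfour : (G.neighborFinset v ∩ G.neighborFinset u).card ≤ 4)
    (hu : G.degree u ≤ 6) : Reducible G := by
  have hmem := hoct.mem_neighborFinset_inter
  have hnodup := hoct.nodup
  obtain ⟨t, ht, hnew⟩ : ∃ t, G.Adj v t ∧ t ∉ [u, a, b, c, d] :=
    exists_adj_notMem (by simp [hv6])
  have hut : ¬G.Adj u t := fun hut => by
    have := mem_of_card_le_length (l := [a, b, c, d]) (by grind) hmem hfour (x := t)
      (by simpa using And.intro ht hut)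
    grind
  have hab : G.Adj a b := hs (hmem a (by simp)) (hmem b (by simp)) (by grind)
  have hcd : G.Adj c d := hs (hmem c (by simp)) (hmem d (by simp)) (by grind)
  have hvt1 : G.adjMatrix ℕ v t = 1 := by simp [ht]
  have hvu1 : G.adjMatrix ℕ v u = 1 := by simp [hvu]
  refine .of_isOctahedron_of_apex hoct (z := t) (by grind [ht.ne]) hab hcd (fun x hx => ?_)
    (by omega)
  exact (hv.isCliqueMinusMatching.adj_of_not_adj hut hvu ht (hoct.left_adj x hx) (by grind)).2.symm

lemma Reducible.of_isClique_of_common_neighbor (hvu : G.Adj v u)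
    (hs : G.IsClique (G.neighborFinset v ∩ G.neighborFinset u : Finset V))
    (hfour : 4 ≤ (G.neighborFinset v ∩ G.neighborFinset u).card)
    (ha : a ∈ G.neighborFinset v ∩ G.neighborFinset u) (hup : G.Adj u p) (hpv : p ≠ v)
    (hvp : ¬G.Adj v p) (hap : G.Adj a p) (hdeg : G.degree v + G.degree u ≤ 12) : Reducible G := by
  obtain ⟨_, hlen, hnodup, hmem⟩ := exists_append_of_le_card (n := 3) (l := [a]) (by simp)
    (by simpa using ha) hfour
  obtain ⟨b, c, d, rfl⟩ := List.length_eq_three.1 hlen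
  simp only [List.cons_append, List.nil_append] at hnodup hmem
  have hN : ∀ t ∈ [a, b, c, d], G.Adj v t ∧ G.Adj u t := fun t ht => by simpa using hmem t ht
  have hne : ∀ t ∈ [a, b, c, d], t ≠ v ∧ t ≠ u ∧ t ≠ p := fun t ht =>
    ⟨(hN t ht).1.ne', (hN t ht).2.ne', fun h => hvp (h ▸ (hN t ht).1)⟩
  have hadj : ∀ x ∈ [a, b, c, d], ∀ y ∈ [a, b, c, d], x ≠ y → G.Adj x y := fun x hx y hy =>
    hs (hmem x hx) (hmem y hy)
  refine .of_clique_of_triangle (v := v) (u := u) (a := a) (b := b) (c := c) (d := d) (p := p)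
    ?_ ?_ ?_ (hadj _ ?_ _ ?_ ?_) (hadj _ ?_ _ ?_ ?_) (hadj _ ?_ _ ?_ ?_) (hadj _ ?_ _ ?_ ?_)
    (hadj _ ?_ _ ?_ ?_) hap hdeg <;> grind [hvu.ne, hup.ne]

lemma Reducible.of_isClique_of_degree_eq_five (hG : EdgesInTriangles G)
    (hv5 : G.degree v = 5) (hvu : G.Adj v u) (hoct : IsOctahedron G v u a b c d)
    (hs : G.IsClique (G.neighborFinset v ∩ G.neighborFinset u : Finset V))
    (hfour : 4 ≤ (G.neighborFinset v ∩ G.neighborFinset u).card)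
    (hu : G.degree u ≤ 7) : Reducible G := by
  have hNv := hoct.left_adj
  have hNu := hoct.right_adj
  have hnodup := hoct.nodup
  have hmem := hoct.mem_neighborFinset_inter
  have hvu1 : G.adjMatrix ℕ v u = 1 := by simp [hvu]
  have huv1 : G.adjMatrix ℕ u v = 1 := by simp [hvu.symm]
  have hab1 := adjMatrix_le_one (G := G) a b
  have hcd1 := adjMatrix_le_one (G := G) c d
  by_cases hu6 : G.degree u ≤ 6
  · exact .of_isOctahedron hoct (by omega)
  obtain ⟨_, hlen, hnodup', hpq⟩ := exists_append_of_le_card (s := G.neighborFinset u) (n := 2)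
    (l := [v, a, b, c, d]) (by grind) (by simpa [hvu.symm] using hNu)
    (by simpa using (by omega : 7 ≤ G.degree u))
  obtain ⟨p, q, rfl⟩ := List.length_eq_two.1 hlen
  simp only [List.cons_append, List.nil_append] at hnodup' hpq
  have hup : G.Adj u p := by simpa using hpq p (by simp)
  have huq : G.Adj u q := by simpa using hpq q (by simp)
  by_cases hadj : G.Adj p q
  · exact .of_isOctahedron_of_adj hoct.symm (by grind [hup.ne, huq.ne]) hup huq hadj (by omega)
  have hvp : ¬G.Adj v p := fun hvp => by
    have := mem_of_card_le_length (s := G.neighborFinset v) (l := [u, a, b, c, d]) (by grind)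
      (by simpa [hvu] using hNv) (by simp [hv5]) (x := p) (by simpa using hvp)
    grind [hup.ne]
  obtain ⟨x, hux, hpx⟩ := hG hup
  have hx := mem_of_card_le_length hnodup' hpq (by simpa using hu) (x := x) (by simpa using hux)
  have hxv : x ≠ v := fun h => hvp (h ▸ hpx.symm)
  have hxq : x ≠ q := fun h => hadj (h ▸ hpx)
  exact .of_isClique_of_common_neighbor hvu hs hfour
    (hmem x (by grind only [= List.mem_cons, hpx.ne'])) hup (by grind) hvp hpx.symm (by omega)

lemma IsTight.exists_not_adj_of_card_inter_le_three (hv : IsTight G v) (hvu : G.Adj v u)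
    (hthree : (G.neighborFinset v ∩ G.neighborFinset u).card ≤ 3) :
    ∃ a b c d, G.degree v = 5 ∧ [u, a, b, c, d].Nodup ∧ (∀ t ∈ [u, a, b, c, d], G.Adj v t) ∧
      ¬G.Adj u a ∧ ∀ t ∈ [b, c, d], G.Adj u t ∧ G.Adj a t := by
  have hmem : u ∈ G.neighborFinset v := by simpa using hvu
  have hfive : 5 ≤ (G.neighborFinset v).card := hv.five_le_degree
  obtain ⟨a, ha, hnew⟩ := Finset.exists_mem_notMem_of_card_lt_card
    (s := G.neighborFinset v ∩ G.neighborFinset u) (t := (G.neighborFinset v).erase u)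
    (by rw [Finset.card_erase_of_mem hmem]; omega)
  obtain ⟨hau, hva⟩ : a ≠ u ∧ G.Adj v a := by simpa using ha
  have hua : ¬G.Adj u a := by simpa [hva] using hnew
  have hadj : ∀ t ∈ ((G.neighborFinset v).erase u).erase a, G.Adj t u ∧ G.Adj t a :=
    fun t ht => hv.isCliqueMinusMatching.adj_of_not_adj hua hvu hva (by simp_all) (by grind)
  have hdeg : G.degree v ≤ 5 := by
    have hle := Finset.card_le_card (s := ((G.neighborFinset v).erase u).erase a)
      (t := G.neighborFinset v ∩ G.neighborFinset u)
      fun t ht => by simpa [(hadj t ht).1.symm] using (show _ ∧ _ ∧ _ by simpa using ht).2.2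
    rw [Finset.card_erase_of_mem ha, Finset.card_erase_of_mem hmem,
      card_neighborFinset_eq_degree] at hle
    omega
  obtain ⟨_, hlen, hnodup, hN⟩ := exists_append_of_le_card (n := 3) (l := [u, a])
    (by simpa using hau.symm) (by simpa using And.intro hvu hva) hfive
  obtain ⟨b, c, d, rfl⟩ := List.length_eq_three.1 hlen
  simp only [List.cons_append, List.nil_append, mem_neighborFinset] at hnodup hN
  refine ⟨a, b, c, d, by have := hv.five_le_degree; omega, hnodup, hN, hua, fun t ht => ?_⟩
  exact (hadj t (by grind [mem_neighborFinset])).imp Adj.symm Adj.symm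

lemma Reducible.of_card_inter_le_three (hG : EdgesInTriangles G)
    (hv : IsTight G v) (hvu : G.Adj v u)
    (hthree : (G.neighborFinset v ∩ G.neighborFinset u).card ≤ 3)
    (hcard : (G.neighborFinset v ∪ G.neighborFinset u).card ≤ 8) : Reducible G := by
  by_contra hred
  obtain ⟨a, b, c, d, hv5, hnodup, hN, hua, hadj⟩ :=
    hv.exists_not_adj_of_card_inter_le_three hvu hthree
  have hsum := Finset.card_union_add_card_inter (G.neighborFinset v) (G.neighborFinset u)
  simp only [card_neighborFinset_eq_degree] at hsum
  have hu : IsTight G u := .of_not_reducible hG hred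
    ((G.degree_pos_iff_exists_adj u).2 ⟨v, hvu.symm⟩) (by omega)
  have hedge : ∀ x ∈ [b, c, d], ∀ y ∈ [b, c, d], x ≠ y → G.Adj x y := fun x hx y hy hxy => by
    by_contra hno
    have := hv.degree_eq_six (a := u) (b := a) (c := x) (d := y) (by grind) (by grind) hua hno
    omega
  have hten : ¬G.degree v + G.degree u ≤ 10 := fun hten => by
    exact hred (.of_clique_of_degree_add_le_ten (v := v) (u := u) (a := a) (b := b) (c := c)
      (d := d) (List.nodup_cons.2 ⟨fun h => (hN v h).ne rfl, hnodup⟩) hN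
      (fun t ht => (hadj t ht).1) (hadj b (by simp)).2 (hadj c (by simp)).2 (hadj d (by simp)).2
      (hedge b (by simp) c (by simp) (by grind)) (hedge b (by simp) d (by simp) (by grind)) hten)
  obtain ⟨_, hlen, hnodup', hpq⟩ := exists_append_of_le_card (s := G.neighborFinset u) (n := 2)
    (l := [v, b, c, d]) (by grind [G.irrefl])
    (by simpa [hvu.symm] using fun t ht => (hadj t ht).1)
    (by simpa using (by omega : 6 ≤ G.degree u))
  obtain ⟨p, q, rfl⟩ := List.length_eq_two.1 hlen
  simp only [List.cons_append, List.nil_append, mem_neighborFinset] at hnodup' hpq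
  have hno : ∀ x ∈ [p, q], ¬G.Adj v x := fun x hx hvx => by
    have := mem_of_card_le_length (s := G.neighborFinset v ∩ G.neighborFinset u) (l := [b, c, d])
      (by grind) (by grind [mem_neighborFinset]) hthree (x := x)
      (by grind [mem_neighborFinset])
    grind
  obtain ⟨hpq_ne, hvp, hvq⟩ : p ≠ q ∧ v ≠ p ∧ v ≠ q := by
    grind only [= List.nodup_cons, = List.mem_cons, List.not_mem_nil]
  exact (hu.isCliqueMinusMatching (hpq p (by simp)) (hpq q (by simp)) hvu.symm hpq_ne hvp hvq).elim
    (hno p (by simp)) (hno q (by simp))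

lemma Reducible.of_adj_of_card_union_le_eight (hG : EdgesInTriangles G) (hv : IsTight G v)
    (hvu : G.Adj v u) (hcard : (G.neighborFinset v ∪ G.neighborFinset u).card ≤ 8) :
    Reducible G := by
  have hsum := Finset.card_union_add_card_inter (G.neighborFinset v) (G.neighborFinset u)
  have hlt : (G.neighborFinset v ∩ G.neighborFinset u).card < (G.neighborFinset v).card :=
    Finset.card_lt_card <|
      Finset.ssubset_iff_of_subset Finset.inter_subset_left |>.2 ⟨u, by simpa using hvu, by simp⟩
  simp only [card_neighborFinset_eq_degree] at hsum hlt
  have hv5 := hv.five_le_degree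
  have hv6 := hv.degree_le_six
  by_cases hfour : 4 ≤ (G.neighborFinset v ∩ G.neighborFinset u).card
  swap
  · exact .of_card_inter_le_three hG hv hvu (by omega) hcard
  obtain ⟨a, b, c, d, hoct, hab⟩ := exists_isOctahedron hv.isCliqueMinusMatching hvu.ne hfour
  by_cases hfive : 4 < (G.neighborFinset v ∩ G.neighborFinset u).card
  · exact .of_isOctahedron_of_five_le hoct hvu hfive (by omega)
  rcases hab with hab | hs
  · have hab0 : G.adjMatrix ℕ a b = 0 := by simp [hab]
    have hvu1 : G.adjMatrix ℕ v u = 1 := by simp [hvu]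
    have hcd1 := adjMatrix_le_one (G := G) c d
    exact .of_isOctahedron hoct (by omega)
  rcases hv6.lt_or_eq with hv6 | hv6
  · exact .of_isClique_of_degree_eq_five hG (by omega) hvu hoct hs hfour (by omega)
  · exact .of_isClique_of_degree_eq_six hv hv6 hvu hoct hs (by omega) (by omega)

end Adj

/-! ### Several tight vertices with a common neighbour -/

lemma Reducible.of_isScheme_of_mem_range [Finite V] {G : SimpleGraph V} {ι : Type*}
    [DecidableEq ι] [Finite ι] {k : ℕ} [NeZero k] (φ : ι → V) (P : Finset ι)
    (X F : Finset (Sym2 ι)) (Y : Fin k → Finset ι) (h : IsScheme P (X ∪ F) Y)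
    (hcard : X.card ≤ 2 * k) (hφ : φ.Injective) (hY : ∀ a, (G.comap φ).IsNClique 3 (Y a))
    (hF : ∀ e ∈ F, e.map φ ∉ G.edgeSet)
    (hP : ∀ i ∈ P, ∀ x, G.Adj (φ i) x → x ∈ Set.range φ) : Reducible G := by
  classical
  have := Fintype.ofFinite V
  have := Fintype.ofFinite ι
  refine .of_isScheme φ P X F Y h hφ hY (add_le_add ?_ (Finset.sum_le_sum fun i hi => ?_))
  · rwa [Finset.filter_false_of_mem hF, Finset.card_empty]
  · rw [ncard_neighborSet, ← card_neighborFinset_sdiff_add_sum G hφ,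
      Finset.sdiff_eq_empty_iff_subset.2 fun x hx => by simpa using hP i hi x (by simpa using hx)]
    simp

section Closed
variable [Fintype V] {G : SimpleGraph V} [DecidableRel G.Adj]

/-- `v` and `w` are nonadjacent tight vertices of degree five with common neighbours `u`, `a`, `b`,
and all neighbours of `u` are among `v`, `w` and their neighbours. -/
structure IsTightPair (G : SimpleGraph V) [DecidableRel G.Adj] (v w u a b c d e f : V) : Prop where
  nodup : [u, v, w, a, b, c, d, e, f].Nodup
  left_isTight : IsTight G v
  right_isTight : IsTight G w
  left_adj : ∀ x, G.Adj v x ↔ x ∈ [u, a, b, c, d]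
  right_adj : ∀ x, G.Adj w x ↔ x ∈ [u, a, b, e, f]
  mem_of_adj : ∀ x, G.Adj u x → x ∈ [v, w, a, b, c, d, e, f]

/-- `v`, `w` and `z` are pairwise nonadjacent tight vertices of degree five which share the
neighbour `u`, any two of them have two more common neighbours, and all neighbours of `u` are among
`v`, `w`, `z` and their neighbours. -/
structure IsTightTriple (G : SimpleGraph V) [DecidableRel G.Adj] (v w z u a b c d e f : V) :
    Prop where
  nodup : [u, v, w, z, a, b, c, d, e, f].Nodup
  fst_isTight : IsTight G v
  snd_isTight : IsTight G w
  thd_isTight : IsTight G z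
  fst_adj : ∀ x, G.Adj v x ↔ x ∈ [u, a, b, c, d]
  snd_adj : ∀ x, G.Adj w x ↔ x ∈ [u, a, b, e, f]
  thd_adj : ∀ x, G.Adj z x ↔ x ∈ [u, c, d, e, f]
  mem_of_adj : ∀ x, G.Adj u x → x ∈ [v, w, z, a, b, c, d, e, f]

variable {u v w z a b c d e f : V}

lemma degree_eq_length {l : List V} (hl : l.Nodup) (h : ∀ x, G.Adj v x ↔ x ∈ l) :
    G.degree v = l.length := by
  classical
  rw [← card_neighborFinset_eq_degree, ← List.toFinset_card_of_nodup hl]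
  congr 1
  ext x
  simp [h]

lemma degree_le_length {l : List V} (h : ∀ x, G.Adj v x → x ∈ l) :
    G.degree v ≤ l.length := by
  classical
  rw [← card_neighborFinset_eq_degree]
  exact (Finset.card_le_card fun x hx => by simpa using h x (by simpa using hx)).trans
    (List.toFinset_card_le l)

lemma IsTight.adj_of_not_adj (hv : IsTight G v) (hnodup : [a, b, c, d, e].Nodup)
    (hN : ∀ x, G.Adj v x ↔ x ∈ [a, b, c, d, e]) (hab : ¬G.Adj a b) :
    (∀ x ∈ [c, d, e], G.Adj a x ∧ G.Adj b x) ∧ G.Adj c d ∧ G.Adj c e ∧ G.Adj d e := by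
  have hv5 : G.degree v = 5 := by simp [degree_eq_length hnodup hN]
  have hN' : ∀ x ∈ [a, b, c, d, e], G.Adj v x := fun x => (hN x).2
  refine ⟨fun x hx => ?_, ?_⟩
  · exact (hv.isCliqueMinusMatching.adj_of_not_adj hab (hN' a (by simp)) (hN' b (by simp))
      (hN' x (by grind)) (by grind)).imp Adj.symm Adj.symm
  · refine ⟨?_, ?_, ?_⟩ <;>
    · by_contra hno
      have := hv.degree_eq_six (a := a) (b := b) (by grind) (by grind) hab hno
      omega

lemma IsTight.exists_isOctahedron {x y : V} (hv : IsTight G v)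
    (hv5 : G.degree v = 5) (hnodup : [u, x, y].Nodup) (hN : ∀ t ∈ [u, x, y], G.Adj v t)
    (hxy : ¬G.Adj x y) : ∃ x' y', IsOctahedron G v u x y x' y' := by
  classical
  have hcard : (G.neighborFinset v).card = 5 := hv5
  obtain ⟨_, hlen, hnodup', hN'⟩ := exists_append_of_le_card (s := G.neighborFinset v) (n := 2)
    (l := [x, y, u]) (by grind) (by grind [mem_neighborFinset]) hcard.ge
  obtain ⟨x', y', rfl⟩ := List.length_eq_two.1 hlen
  simp only [List.cons_append, List.nil_append] at hnodup' hN'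
  obtain ⟨hxyu, hux', huy', -⟩ := hv.adj_of_not_adj hnodup' (fun t => ⟨fun ht =>
    mem_of_card_le_length hnodup' hN' hcard.le (by simpa using ht),
    fun ht => by simpa using hN' t ht⟩) hxy
  simp only [List.forall_mem_cons] at hxyu
  obtain ⟨⟨hxu, hyu⟩, ⟨hxx', hyx'⟩, ⟨hxy', hyy'⟩, -⟩ := hxyu
  have hvt : ∀ t ∈ [x, y, u, x', y'], G.Adj v t := by simpa using hN'
  have hne : ∀ t ∈ [x, y, u, x', y'], t ≠ v := fun t ht => (hvt t ht).ne'
  exact ⟨x', y', by grind, fun t ht => hvt t (by grind), by simp [hxu.symm, hyu.symm, hux', huy'],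
    hxx', hxy', hyx', hyy'⟩

lemma IsTightPair.swap_common (h : IsTightPair G v w u a b c d e f) :
    IsTightPair G v w u b a c d e f := by
  obtain ⟨hnodup, hv, hw, hNv, hNw, hNu⟩ := h
  exact ⟨by grind, hv, hw, by grind, by grind, by grind⟩

lemma IsTightPair.swap_left (h : IsTightPair G v w u a b c d e f) :
    IsTightPair G v w u a b d c e f := by
  obtain ⟨hnodup, hv, hw, hNv, hNw, hNu⟩ := h
  refine ⟨by grind (gen := 20) (instances := 5000), hv, hw, by grind, hNw, fun x hx => ?_⟩
  have := hNu x hx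
  simp only [List.mem_cons, List.not_mem_nil, or_false] at this ⊢
  tauto

lemma IsTightPair.swap_right (h : IsTightPair G v w u a b c d e f) :
    IsTightPair G v w u a b c d f e := by
  obtain ⟨hnodup, hv, hw, hNv, hNw, hNu⟩ := h
  refine ⟨by grind (gen := 20) (instances := 5000), hv, hw, hNv, by grind, fun x hx => ?_⟩
  have := hNu x hx
  simp only [List.mem_cons, List.not_mem_nil, or_false] at this ⊢
  tauto

lemma IsTightPair.adj_or_adj_left (h : IsTightPair G v w u a b c d e f) :
    G.Adj u c ∨ G.Adj u d := by
  obtain ⟨hnodup, hv, -, hNv, -, -⟩ := h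
  have hne : u ≠ c ∧ u ≠ d ∧ c ≠ d := by grind only [= List.nodup_cons, = List.mem_cons]
  have hmem : ∀ x ∈ [u, c, d], x ∈ G.neighborSet v := by simp [hNv]
  exact hv.isCliqueMinusMatching (hmem c (by simp)) (hmem d (by simp)) (hmem u (by simp))
    hne.2.2 hne.1 hne.2.1

lemma IsTightPair.adj_or_adj_right (h : IsTightPair G v w u a b c d e f) :
    G.Adj u e ∨ G.Adj u f := by
  obtain ⟨hnodup, -, hw, -, hNw, -⟩ := h
  have hne : u ≠ e ∧ u ≠ f ∧ e ≠ f := by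
    grind (gen := 20) only [= List.nodup_cons, = List.mem_cons, List.not_mem_nil]
  have hmem : ∀ x ∈ [u, e, f], x ∈ G.neighborSet w := by simp [hNw]
  exact hw.isCliqueMinusMatching (hmem e (by simp)) (hmem f (by simp)) (hmem u (by simp))
    hne.2.2 hne.1 hne.2.1

lemma Reducible.of_isTightPair_of_not_adj (h : IsTightPair G v w u a b c d e f)
    (hua : ¬G.Adj u a) : Reducible G := by
  obtain ⟨hnodup, hv, hw, hNv, hNw, hNu⟩ := h
  refine .of_isScheme_of_mem_range ![u, v, w, a, b, c, d, e, f] {0, 1, 2}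
    {s(3, 4), s(3, 5), s(3, 6), s(3, 8), s(3, 2), s(4, 5), s(4, 6), s(4, 7), s(4, 2), s(5, 6),
      s(7, 8), s(7, 0), s(8, 0), s(0, 1)} {s(1, 2), s(1, 7), s(1, 8), s(2, 5), s(2, 6)}
    ![{3, 4, 5}, {1, 3, 6}, {2, 3, 8}, {2, 4, 7}, {1, 0, 4}, {0, 5, 6}, {0, 7, 8}]
    (by decide) (by decide) (List.nodup_ofFn.1 hnodup) ?_ ?_ ?_
  · have hv' := hv.adj_of_not_adj (by grind) hNv hua
    have hw' := hw.adj_of_not_adj (by grind) hNw hua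
    simp only [List.forall_mem_cons] at hv' hw'
    simp [Fin.forall_fin_succ, is3Clique_triple_iff, *]
  · simp only [Finset.forall_mem_insert, Finset.mem_singleton, forall_eq, Sym2.map_mk, mem_edgeSet,
      Matrix.cons_val, hNv, hNw]
    grind (gen := 20) (ematch := 20) (instances := 5000)
  · simp only [Finset.forall_mem_insert, Finset.mem_singleton, forall_eq, Matrix.cons_val,
      Matrix.cons_val_zero, Matrix.range_cons, Matrix.range_empty, Set.union_empty,
      Set.singleton_union, Set.mem_insert_iff, Set.mem_singleton_iff, hNv, hNw]
    grind (gen := 20) (ematch := 20) (instances := 5000)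

lemma Reducible.of_isTightPair_of_isClique (h : IsTightPair G v w u a b c d e f)
    (hua : G.Adj u a) (hub : G.Adj u b) (hud : G.Adj u d) (huf : G.Adj u f)
    (hclique : ∀ x ∈ [a, b, e, f], ∀ y ∈ [a, b, e, f], x ≠ y → G.Adj x y) : Reducible G := by
  obtain ⟨hnodup, -, -, hNv, hNw, hNu⟩ := h
  have hedges : G.Adj a b ∧ G.Adj a e ∧ G.Adj a f ∧ G.Adj b e ∧ G.Adj b f ∧ G.Adj e f := by
    refine ⟨hclique _ ?_ _ ?_ ?_, hclique _ ?_ _ ?_ ?_, hclique _ ?_ _ ?_ ?_,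
      hclique _ ?_ _ ?_ ?_, hclique _ ?_ _ ?_ ?_, hclique _ ?_ _ ?_ ?_⟩ <;>
      grind only [= List.nodup_cons, = List.mem_cons]
  refine .of_isScheme_of_mem_range ![u, v, w, a, b, c, d, e, f] {0, 1, 2}
    {s(3, 4), s(3, 7), s(3, 8), s(4, 7), s(4, 8), s(5, 0), s(5, 1), s(6, 0), s(6, 1), s(7, 8),
      s(0, 1), s(0, 2)} {s(1, 2), s(1, 7), s(1, 8), s(2, 5), s(2, 6)}
    ![{1, 3, 4}, {3, 7, 8}, {2, 0, 3}, {2, 4, 7}, {0, 4, 8}, {1, 0, 6}]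
    (by decide) (by decide) (List.nodup_ofFn.1 hnodup) ?_ ?_ ?_
  · simp [Fin.forall_fin_succ, is3Clique_triple_iff, *]
  · simp only [Finset.forall_mem_insert, Finset.mem_singleton, forall_eq, Sym2.map_mk, mem_edgeSet,
      Matrix.cons_val, hNv, hNw]
    grind (gen := 20) (ematch := 20) (instances := 5000)
  · simp only [Finset.forall_mem_insert, Finset.mem_singleton, forall_eq, Matrix.cons_val,
      Matrix.cons_val_zero, Matrix.range_cons, Matrix.range_empty, Set.union_empty,
      Set.singleton_union, Set.mem_insert_iff, Set.mem_singleton_iff, hNv, hNw]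
    grind (gen := 20) (ematch := 20) (instances := 5000)

lemma Reducible.of_isTightPair_of_not_isClique {x y : V}
    (h : IsTightPair G v w u a b c d e f) (hud : G.Adj u d) (hx : x ∈ [a, b, e, f])
    (hy : y ∈ [a, b, e, f]) (hxy : x ≠ y) (hadj : ¬G.Adj x y) : Reducible G := by
  obtain ⟨hnodup, -, hw, hNv, hNw, hNu⟩ := h
  have hvd : ∀ t ∈ [u, a, b, e, f], t ≠ v ∧ t ≠ d := by
    grind (gen := 20) (instances := 5000) only [= List.nodup_cons, = List.mem_cons,
      List.not_mem_nil]
  have hvw : v ≠ w ∧ w ≠ d ∧ v ≠ d := by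
    grind only [= List.nodup_cons, = List.mem_cons, List.not_mem_nil]
  have hu : u ∉ [a, b, e, f] := by
    grind only [= List.nodup_cons, = List.mem_cons, List.not_mem_nil]
  have hnodupw : [u, a, b, e, f].Nodup := by
    grind only [= List.nodup_cons, = List.mem_cons, List.not_mem_nil]
  have hw5 : G.degree w = 5 := by simp [degree_eq_length hnodupw hNw]
  have hu8 : G.degree u ≤ 8 := degree_le_length hNu
  obtain ⟨x', y', hoct⟩ := hw.exists_isOctahedron (u := u) (x := x) (y := y) hw5 (by grind)
    (by grind) hadj
  have hnodup8 : [u, w, x, y, x', y', v, d].Nodup := by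
    have hne : ∀ t ∈ [x, y, x', y'], t ≠ v ∧ t ≠ d := fun t ht =>
      hvd t ((hNw t).1 (hoct.left_adj t ht))
    simp only [List.forall_mem_cons] at hne hvd
    have := hoct.nodup
    grind (gen := 20) only [= List.nodup_cons, = List.mem_cons, List.not_mem_nil]
  have hxy0 : G.adjMatrix ℕ x y = 0 := by simp [hadj]
  have hxy1 := adjMatrix_le_one (G := G) x' y'
  have hwu1 : G.adjMatrix ℕ u w = 1 := by simp [G.adj_comm u w, hNw]
  refine .of_isOctahedron_of_adj hoct.symm (p := v) (q := d) hnodup8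
    (by simp [G.adj_comm u v, hNv]) hud (by simp [hNv]) (by omega)

lemma Reducible.of_isTightPair (h : IsTightPair G v w u a b c d e f) :
    Reducible G := by
  by_cases hua : G.Adj u a
  swap
  · exact .of_isTightPair_of_not_adj h hua
  by_cases hub : G.Adj u b
  swap
  · exact .of_isTightPair_of_not_adj h.swap_common hub
  wlog hud : G.Adj u d generalizing c d
  · exact this h.swap_left (h.adj_or_adj_left.resolve_right hud)
  wlog huf : G.Adj u f generalizing e f
  · exact this h.swap_right (h.adj_or_adj_right.resolve_right huf)
  by_cases hclique : ∀ x ∈ [a, b, e, f], ∀ y ∈ [a, b, e, f], x ≠ y → G.Adj x y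
  · exact .of_isTightPair_of_isClique h hua hub hud huf hclique
  push Not at hclique
  obtain ⟨x, hx, y, hy, hxy, hadj⟩ := hclique
  exact .of_isTightPair_of_not_isClique h hud hx hy hxy hadj

lemma IsTightTriple.swap_common (h : IsTightTriple G v w z u a b c d e f) :
    IsTightTriple G v w z u b a c d e f := by
  obtain ⟨hnodup, hv, hw, hz, hNv, hNw, hNz, hNu⟩ := h
  refine ⟨?_, hv, hw, hz, by grind, by grind, hNz, fun x hx => ?_⟩
  · clear hNv hNw hNz hNu
    grind (gen := 20) (instances := 5000)
  · have := hNu x hx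
    simp only [List.mem_cons, List.not_mem_nil, or_false] at this ⊢
    tauto

lemma IsTightTriple.swap_fst_snd (h : IsTightTriple G v w z u a b c d e f) :
    IsTightTriple G w v z u a b e f c d := by
  obtain ⟨hnodup, hv, hw, hz, hNv, hNw, hNz, hNu⟩ := h
  refine ⟨?_, hw, hv, hz, hNw, hNv, by grind, fun x hx => ?_⟩
  · clear hNv hNw hNz hNu
    grind (gen := 20) (instances := 5000)
  · have := hNu x hx
    simp only [List.mem_cons, List.not_mem_nil, or_false] at this ⊢
    tauto

lemma IsTightTriple.swap_snd_thd (h : IsTightTriple G v w z u a b c d e f) :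
    IsTightTriple G v z w u c d a b e f := by
  obtain ⟨hnodup, hv, hw, hz, hNv, hNw, hNz, hNu⟩ := h
  refine ⟨?_, hv, hz, hw, by grind, hNz, hNw, fun x hx => ?_⟩
  · clear hNv hNw hNz hNu
    grind (gen := 20) (instances := 5000)
  · have := hNu x hx
    simp only [List.mem_cons, List.not_mem_nil, or_false] at this ⊢
    tauto

lemma Reducible.of_isTightTriple_of_adj (h : IsTightTriple G v w z u a b c d e f)
    (hu : ∀ x ∈ [b, c, d, e, f], G.Adj u x) (hab : G.Adj a b) (haf : G.Adj a f)
    (hbf : G.Adj b f) : Reducible G := by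
  obtain ⟨hnodup, -, -, -, hNv, hNw, hNz, hNu⟩ := h
  simp only [List.forall_mem_cons] at hu
  refine .of_isScheme_of_mem_range ![u, v, w, z, a, b, c, d, e, f] {0, 1, 2, 3}
    {s(4, 5), s(4, 9), s(4, 0), s(5, 9), s(5, 0), s(6, 0), s(6, 1), s(7, 1), s(7, 3), s(8, 0),
      s(8, 2), s(9, 0)}
    {s(1, 2), s(1, 3), s(2, 3), s(1, 8), s(1, 9), s(2, 6), s(2, 7), s(3, 4), s(3, 5)}
    ![{1, 4, 5}, {2, 4, 9}, {0, 5, 9}, {1, 0, 6}, {3, 0, 7}, {2, 0, 8}]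
    (by decide) (by decide) (List.nodup_ofFn.1 hnodup) ?_ ?_ ?_
  · simp [Fin.forall_fin_succ, is3Clique_triple_iff, *]
  · simp only [Finset.forall_mem_insert, Finset.mem_singleton, forall_eq, Sym2.map_mk, mem_edgeSet,
      Matrix.cons_val, hNv, hNw, hNz]
    grind (gen := 20) (ematch := 20) (instances := 5000)
  · simp only [Finset.forall_mem_insert, Finset.mem_singleton, forall_eq, Matrix.cons_val,
      Matrix.cons_val_zero, Matrix.range_cons, Matrix.range_empty, Set.union_empty,
      Set.singleton_union, Set.mem_insert_iff, Set.mem_singleton_iff, hNv, hNw, hNz]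
    grind (gen := 20) (ematch := 20) (instances := 5000)

lemma Reducible.of_isTightTriple_of_not_adj (h : IsTightTriple G v w z u a b c d e f)
    (hua : ¬G.Adj u a) : Reducible G := by
  have hnodup := h.nodup
  have hv := h.fst_isTight.adj_of_not_adj
    (by grind (gen := 20) only [= List.nodup_cons, = List.mem_cons, List.not_mem_nil]) h.fst_adj hua
  have hw := h.snd_isTight.adj_of_not_adj
    (by grind (gen := 20) only [= List.nodup_cons, = List.mem_cons, List.not_mem_nil]) h.snd_adj hua
  simp only [List.forall_mem_cons] at hv hw
  exact .of_isTightTriple_of_adj h (by simp [hv, hw]) hv.1.1.2 hw.1.2.2.1.2 hw.2.2.1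

lemma Reducible.of_isTightTriple_of_forall_adj (h : IsTightTriple G v w z u a b c d e f)
    (hu : ∀ x ∈ [a, b, c, d, e, f], G.Adj u x) : Reducible G := by
  have hnodup : [u, a, b, e, f].Nodup := by
    have := h.nodup
    grind (gen := 20) only [= List.nodup_cons, = List.mem_cons, List.not_mem_nil]
  have hzwv := h.swap_fst_snd.swap_snd_thd.swap_fst_snd
  by_cases hab : G.Adj a b
  · by_cases hf : G.Adj a f ∧ G.Adj b f
    · exact .of_isTightTriple_of_adj h (by grind) hab hf.1 hf.2
    · have hefe := hzwv.swap_common.swap_fst_snd.swap_snd_thd.swap_fst_snd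
      have he : G.Adj a e ∧ G.Adj b e := by
        rcases not_and_or.1 hf with hf | hf
        · obtain ⟨hx, -, -, hbe⟩ := h.snd_isTight.adj_of_not_adj (c := u) (d := b) (e := e)
            (by grind) (fun x => (h.snd_adj x).trans (by grind)) hf
          exact ⟨(hx e (by simp)).1, hbe⟩
        · obtain ⟨hx, -, -, hae⟩ := h.snd_isTight.adj_of_not_adj (c := u) (d := a) (e := e)
            (by grind) (fun x => (h.snd_adj x).trans (by grind)) hf
          exact ⟨hae, (hx e (by simp)).1⟩
      exact .of_isTightTriple_of_adj hefe (by grind) hab he.1 he.2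
  · obtain ⟨hx, -, -, hef⟩ := h.snd_isTight.adj_of_not_adj (c := u) (d := e) (e := f)
      (by grind) (fun x => (h.snd_adj x).trans (by grind)) hab
    exact .of_isTightTriple_of_adj hzwv (by grind) hef (hx e (by simp)).2.symm
      (hx f (by simp)).2.symm

lemma Reducible.of_isTightTriple (h : IsTightTriple G v w z u a b c d e f) : Reducible G := by
  have hleft : ∀ {v w z a b c d e f}, IsTightTriple G v w z u a b c d e f → ¬Reducible G →
      ∀ x ∈ [a, b], G.Adj u x := by
    intro v w z a b c d e f h hred
    simp only [List.forall_mem_cons, List.not_mem_nil, IsEmpty.forall_iff, implies_true, and_true]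
    exact ⟨not_not.1 fun hu => hred (.of_isTightTriple_of_not_adj h hu),
      not_not.1 fun hu => hred (.of_isTightTriple_of_not_adj h.swap_common hu)⟩
  by_contra hred
  refine hred (.of_isTightTriple_of_forall_adj h ?_)
  exact List.forall_mem_append.2 ⟨hleft h hred, List.forall_mem_append.2
    ⟨hleft h.swap_snd_thd hred, hleft h.swap_fst_snd.swap_snd_thd hred⟩⟩

end Closed

lemma eq_symmDiff_of_card_inter [DecidableEq V] {R A B C : Finset V} (hR : R.card ≤ 6)
    (hA : A ⊆ R) (hB : B ⊆ R) (hC : C ⊆ R) (hcardA : A.card = 4) (hcardB : B.card = 4)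
    (hcardC : C.card = 4) (hAB : (A ∩ B).card = 2) (hAC : (A ∩ C).card = 2)
    (hBC : (B ∩ C).card = 2) : C = symmDiff A B := by
  have hABR : A ∪ B = R := by
    refine Finset.eq_of_subset_of_card_le (Finset.union_subset hA hB) ?_
    have := Finset.card_union_add_card_inter A B
    omega
  have hCA : C \ A = B \ A := by
    refine Finset.eq_of_subset_of_card_le (by grind) ?_
    have := Finset.card_sdiff_add_card_inter C A
    have := Finset.card_sdiff_add_card_inter B A
    grind
  have hCB : C \ B = A \ B := by
    refine Finset.eq_of_subset_of_card_le (by grind) ?_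
    have := Finset.card_sdiff_add_card_inter C B
    have := Finset.card_sdiff_add_card_inter A B
    grind
  have hsub : A \ B ∪ B \ A ⊆ C := by
    rw [← hCA, ← hCB]
    exact Finset.union_subset Finset.sdiff_subset Finset.sdiff_subset
  refine (Finset.eq_of_subset_of_card_le hsub ?_).symm
  have := Finset.card_sdiff_add_card_inter A B
  have := Finset.card_sdiff_add_card_inter B A
  rw [Finset.card_union_of_disjoint disjoint_sdiff_sdiff]
  grind

lemma exists_list_of_card_inter [DecidableEq V] {R A B : Finset V} (hR : R.card ≤ 6)
    (hA : A ⊆ R) (hB : B ⊆ R) (hcardA : A.card = 4) (hcardB : B.card = 4)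
    (hAB : (A ∩ B).card = 2) : ∃ a b c d e f, [a, b, c, d, e, f].Nodup ∧
      (∀ x, x ∈ A ↔ x ∈ [a, b, c, d]) ∧ (∀ x, x ∈ B ↔ x ∈ [a, b, e, f]) ∧
      ∀ x, x ∈ R ↔ x ∈ [a, b, c, d, e, f] := by
  have hABR : A ∪ B = R := by
    refine Finset.eq_of_subset_of_card_le (Finset.union_subset hA hB) ?_
    have := Finset.card_union_add_card_inter A B
    omega
  have hcardAB := Finset.card_sdiff_add_card_inter A B
  have hcardBA := Finset.card_sdiff_add_card_inter B A
  rw [Finset.inter_comm B A] at hcardBA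
  obtain ⟨a, b, hab, habC⟩ := Finset.card_eq_two.1 hAB
  obtain ⟨c, d, hcd, hcdA⟩ := Finset.card_eq_two.1 (show (A \ B).card = 2 by omega)
  obtain ⟨e, f, hef, hefB⟩ := Finset.card_eq_two.1 (show (B \ A).card = 2 by omega)
  clear hR hA hB hcardA hcardB hAB hcardAB hcardBA
  subst hABR
  simp only [Finset.ext_iff, Finset.mem_inter, Finset.mem_sdiff, Finset.mem_insert,
    Finset.mem_singleton] at habC hcdA hefB
  refine ⟨a, b, c, d, e, f, ?_, ?_, ?_, ?_⟩
  · have hC : ∀ x ∈ [a, b], x ∈ A ∧ x ∈ B := by simp [habC]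
    have hA : ∀ x ∈ [c, d], x ∈ A ∧ x ∉ B := by simp [hcdA]
    have hB : ∀ x ∈ [e, f], x ∈ B ∧ x ∉ A := by simp [hefB]
    clear habC hcdA hefB
    simp only [List.forall_mem_cons] at hC hA hB
    grind (gen := 20) only [= List.nodup_cons, = List.mem_cons, List.not_mem_nil, List.nodup_nil]
  all_goals grind

/-- `W` consists of tight neighbours of `u` such that all edges at `W ∪ {u}` lie in `W ∪ {u} ∪ R`,
and `R` has at most six vertices. -/
structure IsTightStar (G : SimpleGraph V) [Fintype V] [DecidableEq V] [DecidableRel G.Adj] (u : V)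
    (W R : Finset V) : Prop where
  disjoint : Disjoint W R
  notMem : u ∉ R
  card_le : R.card ≤ 6
  isTight : ∀ v ∈ W, IsTight G v
  adj : ∀ v ∈ W, G.Adj v u
  neighborFinset_subset : ∀ v ∈ W, G.neighborFinset v ⊆ insert u R
  neighborFinset_center_subset : G.neighborFinset u ⊆ W ∪ R

namespace IsTightStar
variable [Fintype V] [DecidableEq V] {G : SimpleGraph V} [DecidableRel G.Adj] {u v w z : V}
  {W R : Finset V}

lemma not_adj (h : IsTightStar G u W R) (hv : v ∈ W) (hw : w ∈ W) : ¬G.Adj v w := by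
  intro hvw
  have := h.neighborFinset_subset v hv ((G.mem_neighborFinset v w).2 hvw)
  have := (h.adj w hw).ne
  have := Finset.disjoint_left.1 h.disjoint hw
  grind

lemma erase_subset (h : IsTightStar G u W R) (hv : v ∈ W) : (G.neighborFinset v).erase u ⊆ R :=
  Finset.subset_insert_iff.1 (h.neighborFinset_subset v hv)

lemma card_of_ne (h : IsTightStar G u W R) (hred : ¬Reducible G) (hv : v ∈ W) (hw : w ∈ W)
    (hvw : v ≠ w) : ((G.neighborFinset v).erase u).card = 4 ∧
      ((G.neighborFinset v).erase u ∩ (G.neighborFinset w).erase u).card = 2 := by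
  obtain ⟨hv5, -, hcard⟩ := IsTight.degree_eq_five_of_not_adj hred (h.isTight v hv)
    (h.isTight w hw) hvw (h.not_adj hv hw) (by
      refine (Finset.card_le_card (Finset.union_subset (h.neighborFinset_subset v hv)
        (h.neighborFinset_subset w hw))).trans ?_
      rw [Finset.card_insert_of_notMem h.notMem]
      exact Nat.succ_le_succ h.card_le)
  have huv : u ∈ G.neighborFinset v := (G.mem_neighborFinset v u).2 (h.adj v hv)
  have huw : u ∈ G.neighborFinset w := (G.mem_neighborFinset w u).2 (h.adj w hw)
  rw [Finset.erase_inter, Finset.inter_erase, Finset.erase_idem, Finset.card_erase_of_mem huv,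
    Finset.card_erase_of_mem (Finset.mem_inter.2 ⟨huv, huw⟩), card_neighborFinset_eq_degree]
  omega

lemma erase_eq_symmDiff (h : IsTightStar G u W R) (hred : ¬Reducible G) (hv : v ∈ W) (hw : w ∈ W)
    (hz : z ∈ W) (hvw : v ≠ w) (hvz : v ≠ z) (hwz : w ≠ z) : (G.neighborFinset z).erase u =
      symmDiff ((G.neighborFinset v).erase u) ((G.neighborFinset w).erase u) :=
  eq_symmDiff_of_card_inter h.card_le (h.erase_subset hv) (h.erase_subset hw) (h.erase_subset hz)
    (h.card_of_ne hred hv hw hvw).1 (h.card_of_ne hred hw hv hvw.symm).1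
    (h.card_of_ne hred hz hv hvz.symm).1 (h.card_of_ne hred hv hw hvw).2
    (h.card_of_ne hred hv hz hvz).2 (h.card_of_ne hred hw hz hwz).2

lemma subset_of_ne (h : IsTightStar G u W R) (hred : ¬Reducible G) (hv : v ∈ W) (hw : w ∈ W)
    (hz : z ∈ W) (hvw : v ≠ w) (hvz : v ≠ z) (hwz : w ≠ z) : W ⊆ {v, w, z} := by
  intro y hy
  by_contra hy'
  simp only [Finset.mem_insert, Finset.mem_singleton, not_or] at hy'
  obtain ⟨hyv, hyw, hyz⟩ := hy'
  obtain ⟨-, htwo⟩ := h.card_of_ne hred hy hz hyz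
  rw [h.erase_eq_symmDiff hred hv hw hy hvw (Ne.symm hyv) (Ne.symm hyw),
    ← h.erase_eq_symmDiff hred hv hw hz hvw hvz hwz, Finset.inter_self] at htwo
  have := (h.card_of_ne hred hz hy (Ne.symm hyz)).1
  omega

lemma exists_list (h : IsTightStar G u W R) (hred : ¬Reducible G) (hv : v ∈ W) (hw : w ∈ W)
    (hvw : v ≠ w) : ∃ a b c d e f, [u, v, w, a, b, c, d, e, f].Nodup ∧
      (∀ x, G.Adj v x ↔ x ∈ [u, a, b, c, d]) ∧ (∀ x, G.Adj w x ↔ x ∈ [u, a, b, e, f]) ∧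
      ∀ x, x ∈ R ↔ x ∈ [a, b, c, d, e, f] := by
  obtain ⟨hcardv, hinter⟩ := h.card_of_ne hred hv hw hvw
  obtain ⟨a, b, c, d, e, f, hnodup, hNv, hNw, hR⟩ := exists_list_of_card_inter h.card_le
    (h.erase_subset hv) (h.erase_subset hw) hcardv (h.card_of_ne hred hw hv hvw.symm).1 hinter
  have huv := (h.adj v hv).ne
  have huw := (h.adj w hw).ne
  have hvR := Finset.disjoint_left.1 h.disjoint hv
  have hwR := Finset.disjoint_left.1 h.disjoint hw
  have huR := h.notMem
  refine ⟨a, b, c, d, e, f, ?_, fun x => ?_, fun x => ?_, hR⟩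
  · rw [hR] at hvR hwR huR
    simp only [List.nodup_cons (a := u), List.nodup_cons (a := v), List.nodup_cons (a := w)]
    grind
  · grind [mem_neighborFinset, h.adj v hv]
  · grind [mem_neighborFinset, h.adj w hw]

lemma exists_isTightPair (h : IsTightStar G u W R) (hred : ¬Reducible G) (hv : v ∈ W) (hw : w ∈ W)
    (hvw : v ≠ w) (hW : W ⊆ {v, w}) : ∃ a b c d e f, IsTightPair G v w u a b c d e f := by
  obtain ⟨a, b, c, d, e, f, hnodup, hNv, hNw, hR⟩ := h.exists_list hred hv hw hvw
  refine ⟨a, b, c, d, e, f, hnodup, h.isTight v hv, h.isTight w hw, hNv, hNw, fun x hx => ?_⟩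
  have hxWR := h.neighborFinset_center_subset ((G.mem_neighborFinset u x).2 hx)
  have hxW := @hW x
  rw [Finset.mem_union, hR] at hxWR
  grind

lemma exists_isTightTriple (h : IsTightStar G u W R) (hred : ¬Reducible G) (hv : v ∈ W)
    (hw : w ∈ W) (hz : z ∈ W) (hvw : v ≠ w) (hvz : v ≠ z) (hwz : w ≠ z) :
    ∃ a b c d e f, IsTightTriple G v w z u a b c d e f := by
  obtain ⟨a, b, c, d, e, f, hnodup, hNv, hNw, hR⟩ := h.exists_list hred hv hw hvw
  have huz := h.adj z hz
  have hzR := Finset.disjoint_left.1 h.disjoint hz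
  have hsymm := h.erase_eq_symmDiff hred hv hw hz hvw hvz hwz
  rw [hR] at hzR
  refine ⟨a, b, c, d, e, f, ?_, h.isTight v hv, h.isTight w hw, h.isTight z hz, hNv, hNw,
    fun x => ?_, fun x hx => ?_⟩
  · have := huz.ne
    grind (gen := 20) only [= List.nodup_cons, = List.mem_cons, List.not_mem_nil]
  · have hx : x ∈ (G.neighborFinset z).erase u ↔ x ∈ symmDiff ((G.neighborFinset v).erase u)
      ((G.neighborFinset w).erase u) := by rw [hsymm]
    have hne : ∀ t ∈ [c, d], t ∉ [a, b, e, f] := by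
      grind (gen := 20) only [= List.nodup_cons, = List.mem_cons, List.not_mem_nil]
    have hne' : ∀ t ∈ [e, f], t ∉ [a, b] := by
      grind (gen := 20) only [= List.nodup_cons, = List.mem_cons, List.not_mem_nil]
    simp only [Finset.mem_symmDiff, Finset.mem_erase, mem_neighborFinset, hNv, hNw] at hx
    clear hnodup
    grind
  · have hxWR := h.neighborFinset_center_subset ((G.mem_neighborFinset u x).2 hx)
    have hxW := fun hx' : x ∈ W => h.subset_of_ne hred hv hw hz hvw hvz hwz hx'
    rw [Finset.mem_union, hR] at hxWR
    clear hnodup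
    grind

end IsTightStar

section Star
variable [Fintype V] [DecidableEq V] {G : SimpleGraph V} [DecidableRel G.Adj] {u v : V}
  {W R : Finset V}

lemma Reducible.of_isTightStar_singleton (hG : EdgesInTriangles G)
    (h : IsTightStar G u {v} R) : Reducible G := by
  have hv := Finset.mem_singleton_self v
  refine .of_adj_of_card_union_le_eight hG (h.isTight v hv) (h.adj v hv) ?_
  have hsub : G.neighborFinset v ∪ G.neighborFinset u ⊆ insert u (insert v R) := by
    have hNv := h.neighborFinset_subset v hv
    have hNu := h.neighborFinset_center_subset
    grind
  have := Finset.card_le_card hsub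
  have := Finset.card_insert_le u (insert v R)
  have := Finset.card_insert_le v R
  have := h.card_le
  omega

lemma Reducible.of_isTightStar (hG : EdgesInTriangles G) (h : IsTightStar G u W R)
    (hW : W.Nonempty) : Reducible G := by
  by_contra hred
  obtain ⟨v, rfl⟩ | ⟨v, hv, w, hw, hvw⟩ := hW.exists_eq_singleton_or_nontrivial
  · exact hred (.of_isTightStar_singleton hG h)
  by_cases hpair : W ⊆ {v, w}
  · obtain ⟨a, b, c, d, e, f, hpair⟩ := h.exists_isTightPair hred hv hw hvw hpair
    exact hred (.of_isTightPair hpair)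
  · obtain ⟨z, hz, hz'⟩ := Finset.not_subset.1 hpair
    simp only [Finset.mem_insert, Finset.mem_singleton, not_or] at hz'
    obtain ⟨a, b, c, d, e, f, htriple⟩ :=
      h.exists_isTightTriple hred hv hw hz hvw (Ne.symm hz'.1) (Ne.symm hz'.2)
    exact hred (.of_isTightTriple htriple)

end Star

/-! ### Perfect elimination orders of chordal graphs -/

lemma cycleGraph_adj_of_lt {m : ℕ} {i j : Fin m} (hij : i < j) :
    (cycleGraph m).Adj i j ↔ j.val = i.val + 1 ∨ i.val = 0 ∧ j.val + 1 = m := by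
  rw [cycleGraph_adj', Fin.sub_val_of_le hij.le, Fin.coe_sub_iff_lt.2 hij]
  have := j.isLt
  have : i.val < j.val := hij
  omega

lemma not_isChordal_of_induced_path {G : SimpleGraph V} {g : ℕ → V} {n : ℕ} {b : V} (hn : 2 ≤ n)
    (hg : ∀ i j, i < j → j ≤ n → g i ≠ g j ∧ (G.Adj (g i) (g j) ↔ j = i + 1))
    (hb : ∀ i ≤ n, g i ≠ b ∧ (G.Adj (g i) b ↔ i = 0 ∨ i = n)) : ¬ IsChordal G := by
  intro h
  let cycle : Fin (n + 2) → V := fun i => if i.val ≤ n then g i else b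
  have cycle_spec : ∀ i j, i < j → cycle i ≠ cycle j ∧
      (G.Adj (cycle i) (cycle j) ↔ (cycleGraph (n + 2)).Adj i j) := by
    intro i j hij
    rw [cycleGraph_adj_of_lt hij]
    have := j.isLt
    have hij' : i.val < j.val := hij
    have hi : cycle i = g i := if_pos (by omega)
    by_cases hj : j.val ≤ n
    · rw [hi, show cycle j = g j from if_pos hj]
      refine ⟨(hg i j hij' hj).1, (hg i j hij' hj).2.trans ?_⟩
      omega
    · rw [hi, show cycle j = b from if_neg hj]
      refine ⟨(hb i (by omega)).1, (hb i (by omega)).2.trans ?_⟩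
      omega
  refine (h (n + 2) (by omega)).false ⟨⟨cycle, fun i j hij => ?_⟩, fun {i j} => ?_⟩
  · by_contra hne
    rcases lt_or_gt_of_ne hne with hlt | hlt
    · exact (cycle_spec i j hlt).1 hij
    · exact (cycle_spec j i hlt).1 hij.symm
  · change G.Adj (cycle i) (cycle j) ↔ _
    rcases lt_trichotomy i j with hlt | rfl | hlt
    · exact (cycle_spec i j hlt).2
    · simp only [SimpleGraph.irrefl]
    · rw [G.adj_comm, (cycle_spec j i hlt).2, SimpleGraph.adj_comm]

lemma getVert_ne_of_isPath {G : SimpleGraph V} {x y : V} {p : G.Walk x y} (hp : p.IsPath) {i j : ℕ}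
    (hij : i < j) (hj : j ≤ p.length) : p.getVert i ≠ p.getVert j :=
  fun heq => hij.ne (hp.getVert_injOn (hij.le.trans hj) hj heq)

lemma adj_getVert_iff_of_length_eq_dist {G : SimpleGraph V} {x y : V} {p : G.Walk x y}
    (hp : p.length = G.dist x y) {i j : ℕ} (hij : i < j) (hj : j ≤ p.length) :
    G.Adj (p.getVert i) (p.getVert j) ↔ j = i + 1 := by
  refine ⟨fun hadj => ?_, ?_⟩
  · have hle := dist_le ((p.take i).append (Walk.cons hadj (p.drop j)))
    rw [← hp, Walk.length_append, Walk.length_cons, Walk.take_length, Walk.drop_length] at hle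
    omega
  · rintro rfl
    exact p.adj_getVert_succ hj

lemma induce_insert_connected {G : SimpleGraph V} {C : Set V} (hC : (G.induce C).Connected)
    {c x : V} (hc : c ∈ C) (hxc : G.Adj x c) : (G.induce (insert x C)).Connected := by
  have hunion : insert x C = C ∪ {c, x} := by
    rw [Set.union_insert, Set.union_singleton, Set.insert_eq_of_mem (Set.mem_insert_of_mem x hc)]
  rw [hunion]
  exact induce_union_connected hC.preconnected
    (induce_pair_connected_of_adj hxc.symm).preconnected ⟨c, hc, Set.mem_insert c _⟩

/-- The vertex `b` lies outside the closed neighbourhood of the set `C`. -/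
def IsApart (G : SimpleGraph V) (C : Set V) (b : V) : Prop :=
  b ∉ C ∧ ∀ c ∈ C, ¬ G.Adj b c

lemma IsApart.insert {G : SimpleGraph V} {C : Set V} {b x : V} (h : IsApart G C b) (hbx : b ≠ x)
    (hadj : ¬ G.Adj b x) : IsApart G (insert x C) b :=
  ⟨fun hb => hb.elim hbx h.1, Set.forall_mem_insert.2 ⟨hadj, h.2⟩⟩

lemma IsChordal.adj_of_isApart {G : SimpleGraph V} (h : IsChordal G) {C : Set V}
    (hC : (G.induce C).Connected) {x y b c d : V} (hxy : x ≠ y) (hc : c ∈ C) (hxc : G.Adj x c)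
    (hd : d ∈ C) (hyd : G.Adj y d) (hbx : G.Adj b x) (hby : G.Adj b y) (hb : IsApart G C b) :
    G.Adj x y := by
  by_contra hadj
  -- A shortest path from `x` to `y` through `C` closes up with `b` to an induced cycle.
  have hconn := induce_insert_connected (induce_insert_connected hC hc hxc)
    (Set.mem_insert_of_mem x hd) hyd
  obtain ⟨p, hp, hlen⟩ := hconn.exists_path_of_dist
    ⟨x, Set.mem_insert_of_mem y (Set.mem_insert x C)⟩ ⟨y, Set.mem_insert y _⟩
  have hlen_two : 2 ≤ p.length := by
    rw [hlen]
    exact hconn.one_lt_dist_of_ne_of_not_adj (fun heq => hxy (congrArg Subtype.val heq)) hadj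
  refine not_isChordal_of_induced_path (g := fun i => (p.getVert i).1) (b := b) hlen_two
    (fun i j hij hj => ⟨fun heq => getVert_ne_of_isPath hp hij hj (Subtype.ext heq),
      adj_getVert_iff_of_length_eq_dist hlen hij hj⟩) (fun i hi => ⟨?_, fun hib => ?_, ?_⟩) h
  · rcases (p.getVert i).2 with hz | hz | hz
    · exact fun heq => hby.ne' (hz.symm.trans heq)
    · exact fun heq => hbx.ne' (hz.symm.trans heq)
    · exact fun heq => hb.1 (heq ▸ hz)
  · rcases (p.getVert i).2 with hz | hz | hz
    · exact Or.inr ((hp.getVert_eq_end_iff hi).1 (Subtype.ext hz))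
    · exact Or.inl ((hp.getVert_eq_start_iff hi).1 (Subtype.ext hz))
    · exact absurd hib.symm (hb.2 _ hz)
  · rintro (rfl | rfl)
    · simpa only [Walk.getVert_zero] using hbx.symm
    · simpa only [Walk.getVert_length] using hby.symm

/-- The set `C ⊆ s` induces a connected subgraph of `G` and does not dominate `s`. By induction, the
vertices of `s` apart from a maximal such set contain a simplicial vertex of `s`. -/
structure IsConnectedNondominating (G : SimpleGraph V) (s C : Set V) : Prop where
  subset : C ⊆ s
  connected : (G.induce C).Connected
  exists_isApart : ∃ b ∈ s, IsApart G C b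

lemma isConnectedNondominating_singleton {G : SimpleGraph V} {s : Set V} {a b : V} (ha : a ∈ s)
    (hb : b ∈ s) (hab : a ≠ b) (hadj : ¬ G.Adj a b) : IsConnectedNondominating G s {a} where
  subset := Set.singleton_subset_iff.2 ha
  connected := by
    have : Subsingleton ({a} : Set V) := Set.subsingleton_singleton.coe_sort
    exact ⟨Preconnected.of_subsingleton⟩
  exists_isApart :=
    ⟨b, hb, hab.symm, fun c hc hbc => hadj (Set.mem_singleton_iff.1 hc ▸ hbc.symm)⟩

lemma adj_of_maximal_isConnectedNondominating {G : SimpleGraph V} {s C : Set V}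
    (hC : Maximal (IsConnectedNondominating G s) C) {b c x : V} (hb : b ∈ s)
    (hbC : IsApart G C b) (hx : x ∈ s) (hxC : x ∉ C) (hc : c ∈ C) (hxc : G.Adj x c) :
    G.Adj b x := by
  by_contra hbx
  have hne : b ≠ x := fun heq => hbC.2 c hc (heq ▸ hxc)
  exact hxC (hC.le_of_ge ⟨Set.insert_subset hx hC.prop.subset,
    induce_insert_connected hC.prop.connected hc hxc, b, hb, hbC.insert hne hbx⟩
    (Set.subset_insert x C) (Set.mem_insert x C))

lemma IsChordal.isClique_neighborSet_inter {G : SimpleGraph V} (h : IsChordal G) {s C : Set V}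
    (hC : Maximal (IsConnectedNondominating G s) C) {v : V} (hvC : IsApart G C v)
    (hclique : G.IsClique (G.neighborSet v ∩ {b ∈ s | IsApart G C b})) :
    G.IsClique (G.neighborSet v ∩ s) := by
  have apart_or : ∀ x, G.Adj v x → IsApart G C x ∨ x ∉ C ∧ ∃ c ∈ C, G.Adj x c := by
    intro x hvx
    have hxC : x ∉ C := fun hxC => hvC.2 x hxC hvx
    by_cases hx : ∃ c ∈ C, G.Adj x c
    · exact Or.inr ⟨hxC, hx⟩
    · exact Or.inl ⟨hxC, fun c hc hxc => hx ⟨c, hc, hxc⟩⟩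
  rintro x ⟨hvx, hx⟩ y ⟨hvy, hy⟩ hxy
  rcases apart_or x hvx with hxC | ⟨hxC, c, hc, hxc⟩ <;>
    rcases apart_or y hvy with hyC | ⟨hyC, d, hd, hyd⟩
  · exact hclique ⟨hvx, hx, hxC⟩ ⟨hvy, hy, hyC⟩ hxy
  · exact adj_of_maximal_isConnectedNondominating hC hx hxC hy hyC hd hyd
  · exact (adj_of_maximal_isConnectedNondominating hC hy hyC hx hxC hc hxc).symm
  · exact h.adj_of_isApart hC.prop.connected hxy hc hxc hd hyd hvx hvy hvC

lemma IsChordal.exists_simplicial {G : SimpleGraph V} (h : IsChordal G) (s : Finset V)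
    (hs : s.Nonempty) : ∃ v ∈ s, G.IsClique (G.neighborSet v ∩ s) := by
  classical
  induction s using Finset.strongInduction with
  | H s ih =>
  by_cases hclique : G.IsClique (s : Set V)
  · obtain ⟨v, hv⟩ := hs
    exact ⟨v, hv, hclique.subset Set.inter_subset_right⟩
  · obtain ⟨a, ha, b, hb, hab, hadj⟩ : ∃ a ∈ s, ∃ b ∈ s, a ≠ b ∧ ¬ G.Adj a b := by
      simpa [IsClique, Set.Pairwise] using hclique
    have hfinite : {C | IsConnectedNondominating G s C}.Finite :=
      s.finite_toSet.finite_subsets.subset fun C hC => hC.subset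
    obtain ⟨C, -, hC⟩ :=
      hfinite.exists_le_maximal (isConnectedNondominating_singleton ha hb hab hadj)
    obtain ⟨b, hb, hbC⟩ := hC.prop.exists_isApart
    obtain ⟨c, hc⟩ := hC.prop.connected.nonempty
    have hssubset : s.filter (IsApart G C) ⊂ s :=
      Finset.filter_ssubset.2 ⟨c, hC.prop.subset hc, fun hapart => hapart.1 hc⟩
    obtain ⟨v, hv, hvclique⟩ := ih _ hssubset ⟨b, Finset.mem_filter.2 ⟨hb, hbC⟩⟩
    obtain ⟨hvs, hvC⟩ := Finset.mem_filter.1 hv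
    rw [Finset.coe_filter] at hvclique
    exact ⟨v, hvs, h.isClique_neighborSet_inter hC hvC hvclique⟩

/-- The values of `f` order the vertices of `s` so that, within `s`, the later neighbours of each
vertex are pairwise adjacent. -/
structure IsPerfectEliminationOrderOn (G : SimpleGraph V) (s : Set V) (f : V → ℕ) : Prop where
  injOn : Set.InjOn f s
  isClique : ∀ v ∈ s, G.IsClique {x ∈ s | G.Adj v x ∧ f v < f x}

lemma IsPerfectEliminationOrderOn.exists_insert {G : SimpleGraph V} {s : Set V} {f : V → ℕ}
    (hf : IsPerfectEliminationOrderOn G s f) {v : V}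
    (hclique : G.IsClique (G.neighborSet v ∩ s)) :
    ∃ g, IsPerfectEliminationOrderOn G (insert v s) g := by
  classical
  have mem_of_ne : ∀ x ∈ insert v s, x ≠ v → x ∈ s := fun x hx hxv => hx.resolve_left hxv
  have lt_imp : ∀ w x, (if w = v then 0 else f w + 1) < (if x = v then 0 else f x + 1) →
      x ≠ v ∧ (w ≠ v → f w < f x) := by
    grind
  refine ⟨fun x => if x = v then 0 else f x + 1, fun x hx y hy hxy => ?_, fun w hw => ?_⟩
  · have := fun hxv hyv => hf.injOn (mem_of_ne x hx hxv) (mem_of_ne y hy hyv)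
    grind
  · rintro x ⟨hx, hwx, hlx⟩ y ⟨hy, hwy, hly⟩ hxy
    obtain ⟨hxv, hlx⟩ := lt_imp w x hlx
    obtain ⟨hyv, hly⟩ := lt_imp w y hly
    have hxs := mem_of_ne x hx hxv
    have hys := mem_of_ne y hy hyv
    rcases eq_or_ne w v with rfl | hwv
    · exact hclique ⟨hwx, hxs⟩ ⟨hwy, hys⟩ hxy
    · exact hf.isClique w (mem_of_ne w hw hwv) ⟨hxs, hwx, hlx hwv⟩ ⟨hys, hwy, hly hwv⟩ hxy

lemma IsChordal.exists_isPerfectEliminationOrderOn {G : SimpleGraph V} (h : IsChordal G)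
    (s : Finset V) : ∃ f, IsPerfectEliminationOrderOn G s f := by
  classical
  induction s using Finset.strongInduction with
  | H s ih =>
  rcases s.eq_empty_or_nonempty with rfl | hs
  · exact ⟨fun _ => 0, by simp, by simp⟩
  · obtain ⟨v, hv, hclique⟩ := h.exists_simplicial s hs
    obtain ⟨f, hf⟩ := ih _ (Finset.erase_ssubset hv)
    obtain ⟨g, hg⟩ := hf.exists_insert <|
      hclique.subset (Set.inter_subset_inter_right _ (Finset.coe_subset.2 (s.erase_subset v)))
    rw [← Finset.coe_insert, Finset.insert_erase hv] at hg
    exact ⟨g, hg⟩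

lemma card_later_le {H : SimpleGraph V} {n : ℕ} (hH : H.CliqueFree (n + 2)) {s : Set V}
    {f : V → ℕ} (hf : IsPerfectEliminationOrderOn H s f) {v : V} (hv : v ∈ s) {t : Finset V}
    (ht : ∀ x ∈ t, x ∈ s ∧ H.Adj v x ∧ f v < f x) : t.card ≤ n := by
  classical
  have hvt : v ∉ t := fun hvt => (ht v hvt).2.1.ne rfl
  have hclique : H.IsClique (insert v t : Finset V) := by
    rw [Finset.coe_insert, isClique_insert]
    exact ⟨(hf.isClique v hv).subset ht, fun x hx _ => (ht x hx).2.1⟩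
  by_contra! hlt
  refine hH.mono ?_ _ ⟨hclique, rfl⟩
  rw [Finset.card_insert_of_notMem hvt]
  omega

lemma exists_first_upper_endpoint [Finite V] {G : SimpleGraph V} (hG : G ≠ ⊥) {f : V → ℕ}
    (hf : Function.Injective f) : ∃ u, (∃ v, G.Adj v u ∧ f v < f u) ∧
      ∀ ⦃v x⦄, G.Adj v x → f v < f x → f u ≤ f x := by
  obtain ⟨a, b, hab⟩ := ne_bot_iff_exists_adj.1 hG
  have hne : {u | ∃ v, G.Adj v u ∧ f v < f u}.Nonempty := by
    rcases lt_or_gt_of_ne (hf.ne hab.ne) with hlt | hlt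
    · exact ⟨b, a, hab, hlt⟩
    · exact ⟨a, b, hab.symm, hlt⟩
  obtain ⟨u, hu, hmin⟩ := Set.exists_min_image _ f (Set.toFinite _) hne
  exact ⟨u, hu, fun v x hvx hlt => hmin x ⟨v, hvx, hlt⟩⟩

lemma IsPerfectEliminationOrderOn.isTightStar [Fintype V] [DecidableEq V] {G H : SimpleGraph V}
    [DecidableRel G.Adj] [DecidableRel H.Adj] (hGH : G ≤ H) (hK8 : H.CliqueFree 8) {f : V → ℕ}
    (hf : IsPerfectEliminationOrderOn H Set.univ f) (hT : EdgesInTriangles G)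
    (hred : ¬ Reducible G) {u : V} (hmin : ∀ ⦃v x⦄, G.Adj v x → f v < f x → f u ≤ f x) :
    IsTightStar G u {v | G.Adj v u ∧ f v < f u} {x | H.Adj u x ∧ f u < f x} := by
  have lt_or_gt : ∀ v x, G.Adj v x → f v < f x ∨ f x < f v := fun v x hvx =>
    ((Set.injOn_univ.1 hf.injOn).ne hvx.ne).lt_or_gt
  have later : ∀ v, f v < f u → ∀ x, G.Adj v x → f v < f x := fun v hv x hvx =>
    (lt_or_gt v x hvx).resolve_right fun hlt => (hmin hvx.symm hlt).not_gt hv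
  have degree_le : ∀ v, f v < f u → G.degree v ≤ 6 := fun v hv =>
    card_later_le hK8 hf (Set.mem_univ v) fun x hx =>
      have hvx := (G.mem_neighborFinset v x).1 hx
      ⟨Set.mem_univ x, hGH hvx, later v hv x hvx⟩
  refine ⟨?_, fun hu => ((Finset.mem_filter_univ u).1 hu).1.ne rfl, ?_, fun v hv => ?_,
    fun v hv => ((Finset.mem_filter_univ v).1 hv).1, fun v hv x hx => ?_, fun x hx => ?_⟩
  · exact Finset.disjoint_filter.2 fun x _ hxu hux => hxu.2.not_gt hux.2
  · exact card_later_le hK8 hf (Set.mem_univ u) fun x hx =>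
      ⟨Set.mem_univ x, (Finset.mem_filter_univ x).1 hx⟩
  · obtain ⟨hvu, hlt⟩ := (Finset.mem_filter_univ v).1 hv
    exact .of_not_reducible hT hred ((G.degree_pos_iff_exists_adj v).2 ⟨u, hvu⟩) (degree_le v hlt)
  · obtain ⟨hvu, hlt⟩ := (Finset.mem_filter_univ v).1 hv
    rw [mem_neighborFinset] at hx
    have hvx := later v hlt x hx
    rw [Finset.mem_insert, Finset.mem_filter_univ]
    refine or_iff_not_imp_left.2 fun hxu => ⟨?_, (hmin hx hvx).lt_of_ne ?_⟩
    · exact hf.isClique v (Set.mem_univ v) ⟨Set.mem_univ u, hGH hvu, hlt⟩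
        ⟨Set.mem_univ x, hGH hx, hvx⟩ (Ne.symm hxu)
    · exact (Set.injOn_univ.1 hf.injOn).ne (Ne.symm hxu)
  · rw [mem_neighborFinset] at hx
    rw [Finset.mem_union, Finset.mem_filter_univ, Finset.mem_filter_univ]
    exact (lt_or_gt u x hx).symm.imp (fun hlt => ⟨hx.symm, hlt⟩) fun hlt => ⟨hGH hx, hlt⟩

lemma IsPerfectEliminationOrderOn.reducible [Finite V] {G H : SimpleGraph V} (hGH : G ≤ H)
    (hK8 : H.CliqueFree 8) {f : V → ℕ} (hf : IsPerfectEliminationOrderOn H Set.univ f)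
    (hT : EdgesInTriangles G) (hne : G ≠ ⊥) : Reducible G := by
  classical
  have := Fintype.ofFinite V
  by_contra hred
  obtain ⟨u, ⟨v, hv⟩, hmin⟩ := exists_first_upper_endpoint hne (Set.injOn_univ.1 hf.injOn)
  exact hred (.of_isTightStar hT (hf.isTightStar hGH hK8 hT hred hmin)
    ⟨v, (Finset.mem_filter_univ v).2 hv⟩)

lemma tuzaBound_bot : TuzaBound (⊥ : SimpleGraph V) :=
  ⟨∅, ∅, ⟨by simp, fun t ht => absurd ht (cliqueFree_bot (by norm_num) t)⟩,
    ⟨by simp, by simp⟩, by simp⟩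

lemma IsPerfectEliminationOrderOn.tuzaBound [Finite V] {G H : SimpleGraph V} (hGH : G ≤ H)
    (hK8 : H.CliqueFree 8) {f : V → ℕ} (hf : IsPerfectEliminationOrderOn H Set.univ f) :
    TuzaBound G := by
  induction G using WellFoundedLT.induction with
  | ind G ih =>
  have ih' : ∀ G' < G, TuzaBound G' := fun G' hG' => ih G' hG' (hG'.le.trans hGH)
  by_contra hG
  have hT := edgesInTriangles_of_not_tuzaBound hG ih'
  rcases eq_or_ne G ⊥ with rfl | hne
  · exact hG tuzaBound_bot
  · exact hG ((hf.reducible hGH hK8 hT hne).tuzaBound ih')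

theorem tuza_of_chordal_K8_free_general {V : Type*} [Finite V] {G H : SimpleGraph V} (hGH : G ≤ H)
    (hchordal : IsChordal H) (hK8 : H.CliqueFree 8) : tau G ≤ 2 * nu G := by
  have := Fintype.ofFinite V
  obtain ⟨f, hf⟩ := hchordal.exists_isPerfectEliminationOrderOn Finset.univ
  rw [Finset.coe_univ] at hf
  exact (hf.tuzaBound hGH hK8).tau_le

/-- If `G` is a `K₈`-free chordal graph, then `τ(G) ≤ 2·ν(G)`. -/
theorem tuza_of_chordal_K8_free (V : Type) [Fintype V] (G : SimpleGraph V)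
    (hchordal : IsChordal G) (hK8 : G.CliqueFree 8) : tau G ≤ 2 * nu G :=
  tuza_of_chordal_K8_free_general le_rfl hchordal hK8
end
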